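/- arXiv:1102.3619 — 9 statements merged into one kernel-verified Lean document; each statement's English description precedes it below -/
import Mathlib

section
/- Let (V, E, ends) be a finite multigraph and let α : V → ℕ and β : E → ℕ. Then there exists an (α,β)-biorientation of the multigraph if and only if both of the following hold: (i) Σ_{v∈V} α(v) = Σ_{e∈E} β(e), and (ii) for every subset S ⊆ V, Σ_{e∈E_S} β(e) ≤ Σ_{v∈S} α(v), where E_S is the set of edges both of whose endpoints lie in S. -/
/-!
Reading the weight of a half-edge as the amount an edge sends to an endpoint, a biorientation
distributes the demand `β e` of each edge over its endpoints so as to fill every capacity `α v`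
exactly. Allowing capacities to be filled only partially turns this into a capacitated form of
Hall's marriage theorem: replace each edge `e` by `β e` copies, each vertex `v` by `α v` copies, and
match. In Hall's condition for a set of edge copies it suffices to look at all the edges inside the
set `S` of their endpoints, which is condition (ii). Condition (i) then forces every capacity to be
filled.
-/

open Finset

section CapacitatedAssignment

variable {ι κ M : Type*} [Fintype ι]

/-- A distribution `w` of the demands `b i` over the allowed sets `t i` that respects the capacities
`a k`. The weight `w i k` is the amount of the demand `b i` placed on `k`. -/
structure IsCapacitatedAssignment [AddCommMonoid M] [LE M] (t : ι → Finset κ) (a : κ → M)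
    (b : ι → M) (w : ι → κ → M) : Prop where
  eq_zero_of_notMem : ∀ i, ∀ k ∉ t i, w i k = 0
  sum_eq_demand : ∀ i, ∑ k ∈ t i, w i k = b i
  sum_le_capacity : ∀ k, ∑ i, w i k ≤ a k

namespace IsCapacitatedAssignment

variable [AddCommMonoid M] {t : ι → Finset κ} {a : κ → M} {b : ι → M} {w : ι → κ → M}

theorem sum_eq_demand_of_subset [LE M] (h : IsCapacitatedAssignment t a b w) {i : ι}
    {S : Finset κ} (hS : t i ⊆ S) : ∑ k ∈ S, w i k = b i := by
  rw [← h.sum_eq_demand i]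
  exact (sum_subset hS fun k _ hk => h.eq_zero_of_notMem i k hk).symm

theorem sum_demand_le_sum_capacity [DecidableEq κ] [PartialOrder M] [IsOrderedAddMonoid M]
    [CanonicallyOrderedAdd M] (h : IsCapacitatedAssignment t a b w) (S : Finset κ) :
    ∑ i with t i ⊆ S, b i ≤ ∑ k ∈ S, a k :=
  calc
    ∑ i with t i ⊆ S, b i = ∑ i with t i ⊆ S, ∑ k ∈ S, w i k :=
      sum_congr rfl fun _ hi => (h.sum_eq_demand_of_subset (mem_filter.1 hi).2).symm
    _ ≤ ∑ i, ∑ k ∈ S, w i k := sum_le_sum_of_subset (filter_subset _ _)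
    _ = ∑ k ∈ S, ∑ i, w i k := sum_comm
    _ ≤ ∑ k ∈ S, a k := sum_le_sum fun k _ => h.sum_le_capacity k

theorem forall_sum_eq_capacity_iff [Fintype κ] [PartialOrder M] [IsOrderedCancelAddMonoid M]
    (h : IsCapacitatedAssignment t a b w) :
    (∀ k, ∑ i, w i k = a k) ↔ ∑ k, a k = ∑ i, b i := by
  have total : ∑ k, ∑ i, w i k = ∑ i, b i := by
    rw [sum_comm]
    exact sum_congr rfl fun i _ => h.sum_eq_demand_of_subset (subset_univ (t i))
  rw [← total, eq_comm, sum_eq_sum_iff_of_le fun k _ => h.sum_le_capacity k]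
  simp only [mem_univ, forall_const]

end IsCapacitatedAssignment

variable [DecidableEq κ] {t : ι → Finset κ} {a : κ → ℕ} {b : ι → ℕ}

theorem exists_injective_sigma_of_sum_le
    (hall : ∀ S : Finset κ, ∑ i with t i ⊆ S, b i ≤ ∑ k ∈ S, a k) :
    ∃ g : (Σ i, Fin (b i)) → Σ k, Fin (a k), g.Injective ∧ ∀ x, (g x).1 ∈ t x.1 := by
  let copies (S : Finset κ) : Finset (Σ k, Fin (a k)) := S.sigma fun _ => univ
  suffices ∀ s : Finset (Σ i, Fin (b i)), #s ≤ #(s.biUnion fun x => copies (t x.1)) by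
    obtain ⟨g, g_injective, hg⟩ := (all_card_le_biUnion_card_iff_exists_injective _).1 this
    exact ⟨g, g_injective, fun x => (mem_sigma.1 (hg x)).1⟩
  intro s
  let S : Finset κ := s.biUnion fun x => t x.1
  have subset_copies : s ⊆ ({i | t i ⊆ S} : Finset ι).sigma fun _ => univ := fun x hx =>
    mem_sigma.2 ⟨(mem_filter_univ _).2 (subset_biUnion_of_mem (fun x => t x.1) hx), mem_univ _⟩
  have copies_eq : copies S = s.biUnion fun x => copies (t x.1) := by
    ext y
    simp only [copies, S, mem_sigma, mem_biUnion, mem_univ, and_true]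
  calc
    #s ≤ ∑ i with t i ⊆ S, b i := by simpa using card_le_card subset_copies
    _ ≤ ∑ k ∈ S, a k := hall S
    _ = #(copies S) := by simp [copies]
    _ = _ := by rw [copies_eq]

theorem isCapacitatedAssignment_card_of_injective {g : (Σ i, Fin (b i)) → Σ k, Fin (a k)}
    (g_injective : g.Injective) (hg : ∀ x, (g x).1 ∈ t x.1) :
    IsCapacitatedAssignment t a b fun i k => #{j | (g ⟨i, j⟩).1 = k} where
  eq_zero_of_notMem i k hk := by
    rw [card_eq_zero, filter_eq_empty_iff]
    rintro j - rfl
    exact hk (hg ⟨i, j⟩)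
  sum_eq_demand i := by
    rw [← card_eq_sum_card_fiberwise fun j _ => hg ⟨i, j⟩, card_univ, Fintype.card_fin]
  sum_le_capacity k := by
    rw [← card_sigma]
    calc
      _ ≤ #(({k} : Finset κ).sigma fun k => (univ : Finset (Fin (a k)))) :=
        card_le_card_of_injOn g (fun x hx => by simpa using hx) g_injective.injOn
      _ = a k := by rw [card_sigma, sum_singleton, card_univ, Fintype.card_fin]

theorem exists_isCapacitatedAssignment_iff :
    (∃ w, IsCapacitatedAssignment t a b w) ↔
      ∀ S : Finset κ, ∑ i with t i ⊆ S, b i ≤ ∑ k ∈ S, a k := by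
  refine ⟨fun ⟨_, hw⟩ => hw.sum_demand_le_sum_capacity, fun hall => ?_⟩
  obtain ⟨g, g_injective, hg⟩ := exists_injective_sigma_of_sum_le hall
  exact ⟨_, isCapacitatedAssignment_card_of_injective g_injective hg⟩

end CapacitatedAssignment

section EndpointWeight

variable {V M : Type*} [DecidableEq V]

/-- The weight received by the vertex `v` from a single edge with endpoints `x` whose half-edges
have weights `p`; at the vertex of a loop both half-edges count. -/
def endpointWeight [AddZeroClass M] (x : V × V) (p : M × M) (v : V) : M :=
  (if x.1 = v then p.1 else 0) + (if x.2 = v then p.2 else 0)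

theorem endpointWeight_eq_zero_of_notMem [AddZeroClass M] {x : V × V} (p : M × M) {v : V}
    (hv : v ∉ ({x.1, x.2} : Finset V)) : endpointWeight x p v = 0 := by
  rw [mem_insert, mem_singleton, not_or] at hv
  rw [endpointWeight, if_neg (Ne.symm hv.1), if_neg (Ne.symm hv.2), add_zero]

theorem sum_endpointWeight [AddCommMonoid M] (x : V × V) (p : M × M) :
    ∑ v ∈ {x.1, x.2}, endpointWeight x p v = p.1 + p.2 := by
  simp [endpointWeight, sum_add_distrib]

theorem exists_endpointWeight_eq [AddZeroClass M] {x : V × V} {w : V → M}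
    (hw : ∀ v ∉ ({x.1, x.2} : Finset V), w v = 0) : ∃ p, endpointWeight x p = w := by
  refine ⟨(w x.1, if x.1 = x.2 then 0 else w x.2), funext fun v => ?_⟩
  by_cases hv : v ∈ ({x.1, x.2} : Finset V)
  · rw [mem_insert, mem_singleton] at hv
    obtain rfl | rfl := hv
    · by_cases loop : x.1 = x.2
      · simp [endpointWeight, loop]
      · simp [endpointWeight, Ne.symm loop]
    · by_cases loop : x.1 = x.2 <;> simp [endpointWeight, loop]
  · rw [endpointWeight_eq_zero_of_notMem _ hv, hw v hv]

end EndpointWeight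

/-- **Existence criterion for (α,β)-biorientations of a finite multigraph.**
A finite multigraph is given by finite types `V` (vertices) and `E` (edges) and a map
`ends : E → V × V` (the ordered pair of endpoints of each edge).  An `(α,β)`-biorientation
is a function `f : E → ℕ × ℕ` giving the weights of the two half-edges of each edge, such
that the two weights of each edge `e` add up to `β e`, and the total weight of the half-edges
incident to each vertex `v` is `α v`.  Such a biorientation exists iff
(i) `Σ_v α v = Σ_e β e` and (ii) for every subset `S` of vertices, the sum of `β` over the
edges with both endpoints in `S` is at most the sum of `α` over `S`. -/
theorem exists_biorientation_iff {V E : Type*} [Fintype V] [Fintype E] [DecidableEq V]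
    (ends : E → V × V) (α : V → ℕ) (β : E → ℕ) :
    (∃ f : E → ℕ × ℕ,
        (∀ e, (f e).1 + (f e).2 = β e) ∧
        (∀ v, ∑ e, ((if (ends e).1 = v then (f e).1 else 0) +
            (if (ends e).2 = v then (f e).2 else 0)) = α v)) ↔
      ((∑ v, α v = ∑ e, β e) ∧
        ∀ S : Finset V,
          ∑ e ∈ Finset.univ.filter (fun e => (ends e).1 ∈ S ∧ (ends e).2 ∈ S), β e
            ≤ ∑ v ∈ S, α v) := by
  have inside_iff (e : E) (S : Finset V) :
      ((ends e).1 ∈ S ∧ (ends e).2 ∈ S) ↔ {(ends e).1, (ends e).2} ⊆ S := by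
    rw [insert_subset_iff, singleton_subset_iff]
  simp only [inside_iff, ← exists_isCapacitatedAssignment_iff]
  constructor
  · rintro ⟨f, sum_edge, sum_vertex⟩
    have assignment : IsCapacitatedAssignment (fun e => {(ends e).1, (ends e).2}) α β
        fun e => endpointWeight (ends e) (f e) :=
      { eq_zero_of_notMem := fun e _ => endpointWeight_eq_zero_of_notMem (f e)
        sum_eq_demand := fun e => (sum_endpointWeight (ends e) (f e)).trans (sum_edge e)
        sum_le_capacity := fun v => (sum_vertex v).le }
    exact ⟨assignment.forall_sum_eq_capacity_iff.1 sum_vertex, _, assignment⟩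
  · rintro ⟨total, w, assignment⟩
    choose f endpointWeight_f using fun e =>
      exists_endpointWeight_eq (assignment.eq_zero_of_notMem e)
    obtain rfl : (fun e => endpointWeight (ends e) (f e)) = w := funext endpointWeight_f
    exact ⟨f, fun e => (sum_endpointWeight (ends e) (f e)).symm.trans (assignment.sum_eq_demand e),
      assignment.forall_sum_eq_capacity_iff.2 total⟩
end

section
/- Let (V, E, ends) be a finite multigraph, let α : V → ℕ and β : E → ℕ, and let u ∈ V. Assume that (i) Σ_{v∈V} α(v) = Σ_{e∈E} β(e) and (ii) for every subset S ⊆ V, Σ_{e∈E_S} β(e) ≤ Σ_{v∈S} α(v). Then every (α,β)-biorientation is accessible from u if and only if (iii) for every nonempty subset S ⊆ V with u ∉ S, Σ_{e∈E_S} β(e) < Σ_{v∈S} α(v). -/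
/-!
Summing the vertex equations over `S` gives `∑_{v ∈ S} α v = ∑_{e ∈ E_S} β e + c`, where `c` is the
weight of the half-edges through which `S` can be entered from its complement. A biorientation is
accessible from `u` exactly when every nonempty `S` avoiding `u` can be entered, that is, when
`c > 0` for all those `S`. So a *single* biorientation is accessible from `u` if and only if (iii)
holds, and it remains to see that (i) and (ii) provide a biorientation. This is Hall's marriage
theorem: (ii) is Hall's condition for assigning each of the `β e` units of an edge `e` to an
endpoint of `e` with capacity `α`, and (i) forces every capacity to be exhausted.
-/

theorem forall_reflTransGen_iff_forall_set {V : Type*} {r : V → V → Prop} {u : V} :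
    (∀ w, Relation.ReflTransGen r u w) ↔
      ∀ S : Set V, S.Nonempty → u ∉ S → ∃ x ∉ S, ∃ y ∈ S, r x y := by
  constructor
  · rintro reach S ⟨w, hwS⟩ huS
    by_contra! not_entered
    have notMem_of_reach (z : V) (hz : Relation.ReflTransGen r u z) : z ∉ S := by
      induction hz with
      | refl => exact huS
      | tail _ hstep ih => exact fun hzS => not_entered _ ih _ hzS hstep
    exact notMem_of_reach w (reach w) hwS
  · intro entered w
    by_contra hw
    obtain ⟨x, hx, y, hy, hxy⟩ :=
      entered {z | ¬ Relation.ReflTransGen r u z} ⟨w, hw⟩ (fun hu => hu .refl)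
    exact hy ((not_not.mp hx).tail hxy)

section WeightedHall

variable {ι κ : Type*} [DecidableEq κ] (t : ι → Finset κ) (β : ι → ℕ) (α : κ → ℕ)

theorem exists_injective_sigma_fin_of_hall
    (hall : ∀ A : Finset ι, ∑ i ∈ A, β i ≤ ∑ k ∈ A.biUnion t, α k) :
    ∃ m : (Σ i, Fin (β i)) → Σ k, Fin (α k), Function.Injective m ∧ ∀ x, (m x).1 ∈ t x.1 := by
  classical
  let units (x : Σ i, Fin (β i)) : Finset (Σ k, Fin (α k)) := (t x.1).sigma fun _ => .univ
  have hall_units (B : Finset (Σ i, Fin (β i))) : B.card ≤ (B.biUnion units).card := by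
    let A := B.image Sigma.fst
    have hB : B ⊆ A.sigma fun _ => .univ := fun x hx =>
      Finset.mem_sigma.mpr ⟨Finset.mem_image_of_mem _ hx, Finset.mem_univ _⟩
    have hunits :
        (A.biUnion t).sigma (fun k => (.univ : Finset (Fin (α k)))) = B.biUnion units := by
      ext p
      simp [A, units]
    calc B.card ≤ (A.sigma fun i => (.univ : Finset (Fin (β i)))).card := Finset.card_le_card hB
      _ = ∑ i ∈ A, β i := by simp
      _ ≤ ∑ k ∈ A.biUnion t, α k := hall A
      _ = (B.biUnion units).card := by simp [← hunits]
  obtain ⟨m, m_injective, hm⟩ :=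
    (Finset.all_card_le_biUnion_card_iff_exists_injective units).mp hall_units
  exact ⟨m, m_injective, fun x => (Finset.mem_sigma.mp (hm x)).1⟩

theorem exists_sum_eq_sum_le_of_hall
    (hall : ∀ A : Finset ι, ∑ i ∈ A, β i ≤ ∑ k ∈ A.biUnion t, α k) :
    ∃ g : ι → κ → ℕ, (∀ i, ∀ k ∉ t i, g i k = 0) ∧ (∀ i, ∑ k ∈ t i, g i k = β i) ∧
      ∀ (A : Finset ι) (k : κ), ∑ i ∈ A, g i k ≤ α k := by
  obtain ⟨m, m_injective, hm⟩ := exists_injective_sigma_fin_of_hall t β α hall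
  let fiber (i : ι) (k : κ) : Finset (Fin (β i)) := {j | (m ⟨i, j⟩).1 = k}
  refine ⟨fun i k => (fiber i k).card, fun i k hk => ?_, fun i => ?_, fun A k => ?_⟩
  · refine Finset.card_eq_zero.mpr (Finset.filter_eq_empty_iff.mpr ?_)
    rintro j - rfl
    exact hk (hm ⟨i, j⟩)
  · rw [← Finset.card_eq_sum_card_fiberwise fun j _ => hm ⟨i, j⟩, Finset.card_fin]
  · calc ∑ i ∈ A, (fiber i k).card = (A.sigma (fiber · k)).card := (Finset.card_sigma _ _).symm
      _ ≤ (({k} : Finset κ).sigma fun k => (.univ : Finset (Fin (α k)))).card := by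
        refine Finset.card_le_card_of_injOn m (fun x hx => ?_) m_injective.injOn
        simpa [fiber] using (Finset.mem_sigma.mp hx).2
      _ = α k := by simp

theorem exists_sum_eq_sum_eq_of_hall [Fintype ι] [Fintype κ] (htotal : ∑ k, α k = ∑ i, β i)
    (hall : ∀ A : Finset ι, ∑ i ∈ A, β i ≤ ∑ k ∈ A.biUnion t, α k) :
    ∃ g : ι → κ → ℕ, (∀ i, ∀ k ∉ t i, g i k = 0) ∧ (∀ i, ∑ k ∈ t i, g i k = β i) ∧
      ∀ k, ∑ i, g i k = α k := by
  obtain ⟨g, g_support, g_row, g_col⟩ := exists_sum_eq_sum_le_of_hall t β α hall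
  have g_row_univ (i : ι) : ∑ k, g i k = β i := by
    rw [← g_row i]
    exact (Finset.sum_subset (Finset.subset_univ _) fun k _ hk => g_support i k hk).symm
  have g_total : ∑ k, ∑ i, g i k = ∑ k, α k := by
    rw [Finset.sum_comm, htotal]
    exact Finset.sum_congr rfl fun i _ => g_row_univ i
  have g_col_eq := (Finset.sum_eq_sum_iff_of_le fun k _ => g_col .univ k).mp g_total
  exact ⟨g, g_support, g_row, fun k => g_col_eq k (Finset.mem_univ k)⟩

end WeightedHall

section Biorientation

variable {V E : Type*} (ends : E → V × V)

/-- The one-step traversal relation of the half-edge weights `f`: some edge joins `x` to `y` and has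
positive weight on its half-edge at `y`. -/
def CanTraverse (f : E → ℕ × ℕ) (x y : V) : Prop :=
  ∃ e, (ends e = (x, y) ∧ 0 < (f e).2) ∨ (ends e = (y, x) ∧ 0 < (f e).1)

/-- Every vertex is accessible from `u` under the half-edge weights `f`. -/
def IsAccessibleFrom (f : E → ℕ × ℕ) (u : V) : Prop :=
  ∀ w, Relation.ReflTransGen (CanTraverse ends f) u w

variable [Fintype E] [DecidableEq V]

/-- The set `E_S` of the edges with both endpoints in `S`. -/
def inducedEdges (S : Finset V) : Finset E :=
  Finset.univ.filter fun e => (ends e).1 ∈ S ∧ (ends e).2 ∈ S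

/-- The half-edge weights `f` form an `(α,β)`-biorientation. A loop at `v` contributes both of its
half-edges to the weight at `v`. -/
structure IsBiorientation (α : V → ℕ) (β : E → ℕ) (f : E → ℕ × ℕ) : Prop where
  edge_weight : ∀ e, (f e).1 + (f e).2 = β e
  vertex_weight : ∀ v, ∑ e, ((if (ends e).1 = v then (f e).1 else 0) +
    (if (ends e).2 = v then (f e).2 else 0)) = α v

/-- The total weight of the half-edges that lie at a vertex of `S` on an edge whose other endpoint
is outside `S`. It measures by how much condition (ii) fails to be tight at `S`. -/
def enteringWeight (f : E → ℕ × ℕ) (S : Finset V) : ℕ :=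
  ∑ e, ((if (ends e).1 ∈ S ∧ (ends e).2 ∉ S then (f e).1 else 0) +
    (if (ends e).1 ∉ S ∧ (ends e).2 ∈ S then (f e).2 else 0))

variable {ends}

theorem enteringWeight_pos_iff {f : E → ℕ × ℕ} {S : Finset V} :
    0 < enteringWeight ends f S ↔ ∃ x ∉ S, ∃ y ∈ S, CanTraverse ends f x y := by
  simp only [enteringWeight, Finset.sum_pos_iff, Finset.mem_univ, true_and]
  constructor
  · rintro ⟨e, he⟩
    by_cases hfst : (ends e).1 ∈ S <;> by_cases hsnd : (ends e).2 ∈ S <;>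
      simp only [hfst, hsnd, not_true, not_false_iff, and_self, and_true, and_false,
        if_true, if_false, add_zero, zero_add, lt_irrefl] at he
    · exact ⟨_, hsnd, _, hfst, e, .inr ⟨rfl, he⟩⟩
    · exact ⟨_, hfst, _, hsnd, e, .inl ⟨rfl, he⟩⟩
  · rintro ⟨x, hx, y, hy, e, ⟨hends, hpos⟩ | ⟨hends, hpos⟩⟩ <;>
      exact ⟨e, by simpa [hends, hx, hy] using hpos⟩

namespace IsBiorientation

variable {α : V → ℕ} {β : E → ℕ} {f : E → ℕ × ℕ}

theorem sum_eq_sum_inducedEdges_add_enteringWeight (hf : IsBiorientation ends α β f)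
    (S : Finset V) :
    ∑ v ∈ S, α v = ∑ e ∈ inducedEdges ends S, β e + enteringWeight ends f S := by
  calc ∑ v ∈ S, α v
      = ∑ e, ((if (ends e).1 ∈ S then (f e).1 else 0) +
          (if (ends e).2 ∈ S then (f e).2 else 0)) := by
        simp_rw [← hf.vertex_weight]
        rw [Finset.sum_comm]
        simp_rw [Finset.sum_add_distrib, Finset.sum_ite_eq]
    _ = ∑ e ∈ inducedEdges ends S, β e + enteringWeight ends f S := by
        rw [inducedEdges, enteringWeight, Finset.sum_filter, ← Finset.sum_add_distrib]
        refine Finset.sum_congr rfl fun e _ => ?_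
        rw [← hf.edge_weight e]
        by_cases hfst : (ends e).1 ∈ S <;> by_cases hsnd : (ends e).2 ∈ S <;> simp [hfst, hsnd]

theorem isAccessibleFrom_iff_forall_sum_lt [Finite V] (hf : IsBiorientation ends α β f) (u : V) :
    IsAccessibleFrom ends f u ↔
      ∀ S : Finset V, S.Nonempty → u ∉ S → ∑ e ∈ inducedEdges ends S, β e < ∑ v ∈ S, α v := by
  have := Fintype.ofFinite V
  simp_rw [hf.sum_eq_sum_inducedEdges_add_enteringWeight, lt_add_iff_pos_right,
    enteringWeight_pos_iff, IsAccessibleFrom, forall_reflTransGen_iff_forall_set]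
  rw [← Fintype.finsetEquivSet.forall_congr_right]
  simp only [Fintype.finsetEquivSet_apply, Finset.coe_nonempty, Finset.mem_coe]

end IsBiorientation

theorem exists_isBiorientation [Fintype V] (α : V → ℕ) (β : E → ℕ)
    (htotal : ∑ v, α v = ∑ e, β e)
    (hinduced : ∀ S : Finset V, ∑ e ∈ inducedEdges ends S, β e ≤ ∑ v ∈ S, α v) :
    ∃ f, IsBiorientation ends α β f := by
  let endpoints (e : E) : Finset V := {(ends e).1, (ends e).2}
  have hall (A : Finset E) : ∑ e ∈ A, β e ≤ ∑ v ∈ A.biUnion endpoints, α v := by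
    have hA : A ⊆ inducedEdges ends (A.biUnion endpoints) := fun e he =>
      Finset.mem_filter.mpr ⟨Finset.mem_univ e,
        Finset.mem_biUnion.mpr ⟨e, he, by simp [endpoints]⟩,
        Finset.mem_biUnion.mpr ⟨e, he, by simp [endpoints]⟩⟩
    exact (Finset.sum_le_sum_of_subset hA).trans (hinduced _)
  obtain ⟨g, g_support, g_edge, g_vertex⟩ :=
    exists_sum_eq_sum_eq_of_hall endpoints β α htotal hall
  -- A loop carries all of its weight on its first half-edge.
  refine ⟨fun e => (g e (ends e).1, if (ends e).2 = (ends e).1 then 0 else g e (ends e).2),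
    fun e => ?_, fun v => ?_⟩
  · rw [← g_edge e]
    by_cases hloop : (ends e).2 = (ends e).1
    · simp [endpoints, hloop]
    · simp [endpoints, hloop, Finset.sum_pair (Ne.symm hloop)]
  · rw [← g_vertex v]
    refine Finset.sum_congr rfl fun e _ => ?_
    have g_off_ends : v ≠ (ends e).1 → v ≠ (ends e).2 → g e v = 0 := fun hfst hsnd =>
      g_support e v (by simp [endpoints, hfst, hsnd])
    grind

end Biorientation

/-- **Accessibility criterion for (α,β)-biorientations of a finite multigraph.**
A finite multigraph is given by finite types `V` and `E` and `ends : E → V × V`.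
An `(α,β)`-biorientation is `f : E → ℕ × ℕ` (half-edge weights, first component at the first
endpoint) with the two weights of each edge `e` adding up to `β e` and the total ingoing
weight at each vertex `v` equal to `α v`.  An edge `e` with `ends e = (x,y)` can be traversed
from `x` to `y` when `(f e).2 > 0` and from `y` to `x` when `(f e).1 > 0`; the biorientation
is accessible from `u` when every vertex is reachable from `u` by such traversals.
Assuming the existence conditions (i) `Σ_v α v = Σ_e β e` and
(ii) `Σ_{e ∈ E_S} β e ≤ Σ_{v ∈ S} α v` for all `S`, every `(α,β)`-biorientation is accessible
from `u` iff (iii) for every nonempty `S` not containing `u`,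
`Σ_{e ∈ E_S} β e < Σ_{v ∈ S} α v`. -/
theorem biorientations_accessible_iff {V E : Type*} [Fintype V] [Fintype E] [DecidableEq V]
    (ends : E → V × V) (α : V → ℕ) (β : E → ℕ) (u : V)
    (h1 : ∑ v, α v = ∑ e, β e)
    (h2 : ∀ S : Finset V,
      ∑ e ∈ Finset.univ.filter (fun e => (ends e).1 ∈ S ∧ (ends e).2 ∈ S), β e
        ≤ ∑ v ∈ S, α v) :
    (∀ f : E → ℕ × ℕ,
        (∀ e, (f e).1 + (f e).2 = β e) →
        (∀ v, ∑ e, ((if (ends e).1 = v then (f e).1 else 0) +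
            (if (ends e).2 = v then (f e).2 else 0)) = α v) →
        ∀ w : V, Relation.ReflTransGen
          (fun x y => ∃ e, (ends e = (x, y) ∧ 0 < (f e).2) ∨ (ends e = (y, x) ∧ 0 < (f e).1))
          u w) ↔
      (∀ S : Finset V, S.Nonempty → u ∉ S →
        ∑ e ∈ Finset.univ.filter (fun e => (ends e).1 ∈ S ∧ (ends e).2 ∈ S), β e
          < ∑ v ∈ S, α v) := by
  constructor
  · intro accessible
    obtain ⟨f, hf⟩ := exists_isBiorientation α β h1 h2
    exact (hf.isAccessibleFrom_iff_forall_sum_lt u).mp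
      (accessible f hf.edge_weight hf.vertex_weight)
  · intro strict f edge_weight vertex_weight
    have hf : IsBiorientation ends α β f := ⟨edge_weight, vertex_weight⟩
    exact (hf.isAccessibleFrom_iff_forall_sum_lt u).mpr strict
end

section
/- Let p, q, e be positive integers and let i, j be natural numbers with i + e ≤ p and j + e ≤ q. Then, in ℚ, Σ_{a=e}^{min(p−i, q−j)} a·γ(p,i,a)·γ(q,j,a) = 2·β(p,i,e)·β(q,j,e)/(p+q−i−j) if i + j ≡ p + q (mod 2), and Σ_{a=e}^{min(p−i, q−j)} a·γ(p,i,a)·γ(q,j,a) = 0 otherwise. -/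
/-- `γ(p,i,a) = p!/(i!·((p−i−a)/2)!·((p−i+a)/2)!)` if `a ≤ p−i` and `p−i−a` is even,
and `0` otherwise. -/
noncomputable def gammaCoef (p i a : ℕ) : ℚ :=
  if i + a ≤ p ∧ (p - i - a) % 2 = 0 then
    (p.factorial : ℚ) /
      ((i.factorial : ℚ) * (((p - i - a) / 2).factorial : ℚ) *
        (((p - i + a) / 2).factorial : ℚ))
  else 0

/-- `β(p,i,e) = p!/(i!·⌊(p−i−e)/2⌋!·⌊(p−i+e−1)/2⌋!)` if `i + e ≤ p`, and `0` otherwise. -/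
noncomputable def betaCoef (p i e : ℕ) : ℚ :=
  if i + e ≤ p then
    (p.factorial : ℚ) /
      ((i.factorial : ℚ) * (((p - i - e) / 2).factorial : ℚ) *
        (((p - i + e - 1) / 2).factorial : ℚ))
  else 0

/-!
When `p - i - a` is even, absorbing a factor into a factorial gives
`2 β(p,i,a) = (p - i + a) γ(p,i,a)` and `2 β(p,i,a+1) = (p - i - a) γ(p,i,a)`.
With `P = p - i` and `Q = q - j`, the identity `(P + a)(Q + a) - (P - a)(Q - a) = 2a(P + Q)` then
makes `(P + Q) · a · γ(p,i,a) γ(q,j,a)` the decrement of `2 β(p,i,a) β(q,j,a)` from `a` to `a + 1`.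
When `p - i - a` and `q - j - a` are both odd, `γ` vanishes and `β` is constant from `a` to `a + 1`,
so the same holds, and the sum telescopes.
-/

section Coefficients

variable {p i a : ℕ}

lemma gammaCoef_eq_zero_of_lt (h : p < i + a) : gammaCoef p i a = 0 :=
  if_neg (by omega)

lemma betaCoef_eq_zero_of_lt (h : p < i + a) : betaCoef p i a = 0 :=
  if_neg (by omega)

lemma gammaCoef_eq_zero_of_odd (h : Odd (p + i + a)) : gammaCoef p i a = 0 :=
  if_neg (by rw [Nat.odd_iff] at h; omega)

lemma betaCoef_succ_of_odd (h : Odd (p + i + a)) : betaCoef p i (a + 1) = betaCoef p i a := by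
  rw [Nat.odd_iff] at h
  by_cases hle : i + a ≤ p
  · have h_lower : (p - i - (a + 1)) / 2 = (p - i - a) / 2 := by omega
    have h_upper : (p - i + (a + 1) - 1) / 2 = (p - i + a - 1) / 2 := by omega
    rw [betaCoef, betaCoef, if_pos (by omega), if_pos hle, h_lower, h_upper]
  · rw [betaCoef_eq_zero_of_lt (by omega), betaCoef_eq_zero_of_lt (by omega)]

lemma gammaCoef_add_add_two_mul (i a x : ℕ) :
    gammaCoef (i + a + 2 * x) i a =
      (i + a + 2 * x).factorial / (i.factorial * x.factorial * (x + a).factorial) := by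
  have h_lower : (i + a + 2 * x - i - a) / 2 = x := by omega
  have h_upper : (i + a + 2 * x - i + a) / 2 = x + a := by omega
  rw [gammaCoef, if_pos (by omega), h_lower, h_upper]

lemma betaCoef_add_add_two_mul (i x : ℕ) (ha : 0 < a) :
    betaCoef (i + a + 2 * x) i a = (x + a) * gammaCoef (i + a + 2 * x) i a := by
  have h_lower : (i + a + 2 * x - i - a) / 2 = x := by omega
  have h_upper : (i + a + 2 * x - i + a - 1) / 2 = x + a - 1 := by omega
  rw [gammaCoef_add_add_two_mul, betaCoef, if_pos (by omega), h_lower, h_upper,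
    ← Nat.mul_factorial_pred (n := x + a) (by omega)]
  push_cast
  field_simp

lemma betaCoef_add_add_two_mul_succ (i a x : ℕ) :
    betaCoef (i + a + 2 * x) i (a + 1) = x * gammaCoef (i + a + 2 * x) i a := by
  obtain rfl | hx := Nat.eq_zero_or_pos x
  · rw [betaCoef_eq_zero_of_lt (by omega), Nat.cast_zero, zero_mul]
  · have h_lower : (i + a + 2 * x - i - (a + 1)) / 2 = x - 1 := by omega
    have h_upper : (i + a + 2 * x - i + (a + 1) - 1) / 2 = x + a := by omega
    rw [gammaCoef_add_add_two_mul, betaCoef, if_pos (by omega), h_lower, h_upper,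
      ← Nat.mul_factorial_pred hx.ne']
    push_cast
    field_simp

lemma two_mul_betaCoef_of_even (ha : 0 < a) (h : Even (p + i + a)) :
    2 * betaCoef p i a = ((p : ℚ) - i + a) * gammaCoef p i a := by
  obtain hlt | hle := lt_or_ge p (i + a)
  · rw [betaCoef_eq_zero_of_lt hlt, gammaCoef_eq_zero_of_lt hlt, mul_zero, mul_zero]
  · obtain ⟨x, rfl⟩ : ∃ x, p = i + a + 2 * x :=
      ⟨(p - i - a) / 2, by rw [Nat.even_iff] at h; omega⟩
    rw [betaCoef_add_add_two_mul i x ha]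
    push_cast
    ring

lemma two_mul_betaCoef_succ_of_even (h : Even (p + i + a)) :
    2 * betaCoef p i (a + 1) = ((p : ℚ) - i - a) * gammaCoef p i a := by
  obtain hlt | hle := lt_or_ge p (i + a)
  · rw [betaCoef_eq_zero_of_lt (by omega), gammaCoef_eq_zero_of_lt hlt, mul_zero, mul_zero]
  · obtain ⟨x, rfl⟩ : ∃ x, p = i + a + 2 * x :=
      ⟨(p - i - a) / 2, by rw [Nat.even_iff] at h; omega⟩
    rw [betaCoef_add_add_two_mul_succ]
    push_cast
    ring

end Coefficients

section Products

variable {p q i j a : ℕ}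

lemma gammaCoef_mul_gammaCoef_eq_zero_of_odd (h : Odd (p + i + (q + j))) :
    gammaCoef p i a * gammaCoef q j a = 0 := by
  obtain hodd | hodd : Odd (p + i + a) ∨ Odd (q + j + a) := by
    simp only [Nat.odd_iff] at h ⊢
    omega
  · rw [gammaCoef_eq_zero_of_odd hodd, zero_mul]
  · rw [gammaCoef_eq_zero_of_odd hodd, mul_zero]

lemma betaCoef_mul_betaCoef_eq_zero_of_min_lt (h : min (p - i) (q - j) < a) :
    betaCoef p i a * betaCoef q j a = 0 := by
  obtain hlt | hlt : p < i + a ∨ q < j + a := by omega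
  · rw [betaCoef_eq_zero_of_lt hlt, zero_mul]
  · rw [betaCoef_eq_zero_of_lt hlt, mul_zero]

lemma mul_gammaCoef_mul_gammaCoef_eq_sub (ha : 0 < a) (h : Even (p + i + (q + j))) :
    a * gammaCoef p i a * gammaCoef q j a * ((p : ℚ) + q - i - j) =
      2 * betaCoef p i a * betaCoef q j a - 2 * betaCoef p i (a + 1) * betaCoef q j (a + 1) := by
  obtain hpi | hpi := Nat.even_or_odd (p + i + a)
  · have hqj : Even (q + j + a) := by
      rw [Nat.even_iff] at *
      omega
    linear_combination
      -betaCoef q j a * two_mul_betaCoef_of_even ha hpi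
      - ((p : ℚ) - i + a) * gammaCoef p i a / 2 * two_mul_betaCoef_of_even ha hqj
      + betaCoef q j (a + 1) * two_mul_betaCoef_succ_of_even hpi
      + ((p : ℚ) - i - a) * gammaCoef p i a / 2 * two_mul_betaCoef_succ_of_even hqj
  · have hqj : Odd (q + j + a) := by
      rw [Nat.even_iff] at h
      rw [Nat.odd_iff] at *
      omega
    rw [gammaCoef_eq_zero_of_odd hpi, betaCoef_succ_of_odd hpi, betaCoef_succ_of_odd hqj]
    ring

lemma sum_Icc_mul_gammaCoef_mul_gammaCoef_eq_sub {m n : ℕ} (hm : 0 < m) (hmn : m ≤ n)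
    (h : Even (p + i + (q + j))) :
    (∑ a ∈ Finset.Icc m n, (a : ℚ) * gammaCoef p i a * gammaCoef q j a) *
        ((p : ℚ) + q - i - j) =
      2 * betaCoef p i m * betaCoef q j m - 2 * betaCoef p i (n + 1) * betaCoef q j (n + 1) := by
  let f : ℕ → ℚ := fun a ↦ 2 * betaCoef p i a * betaCoef q j a
  calc
    _ = ∑ a ∈ Finset.Icc m n, -(f (a + 1) - f a) := by
      rw [Finset.sum_mul]
      refine Finset.sum_congr rfl fun a ha ↦ ?_
      rw [neg_sub, mul_gammaCoef_mul_gammaCoef_eq_sub (hm.trans_le (Finset.mem_Icc.mp ha).1) h]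
    _ = f m - f (n + 1) := by
      rw [Finset.sum_neg_distrib, Finset.sum_Icc_sub hmn, neg_sub]

end Products

/-- For positive integers `p, q, e` and naturals `i, j` with `i + e ≤ p` and `j + e ≤ q`,
`Σ_{a=e}^{min(p−i,q−j)} a·γ(p,i,a)·γ(q,j,a)` equals `2·β(p,i,e)·β(q,j,e)/(p+q−i−j)` when
`i + j ≡ p + q (mod 2)`, and `0` otherwise. -/
theorem sum_gamma_eq_beta (p q e i j : ℕ) (hp : 0 < p) (hq : 0 < q) (he : 0 < e)
    (hi : i + e ≤ p) (hj : j + e ≤ q) :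
    (∑ a ∈ Finset.Icc e (min (p - i) (q - j)),
        (a : ℚ) * gammaCoef p i a * gammaCoef q j a) =
      if (i + j) % 2 = (p + q) % 2 then
        2 * betaCoef p i e * betaCoef q j e / ((p : ℚ) + q - i - j)
      else 0 := by
  split_ifs with hparity
  · have heven : Even (p + i + (q + j)) := by
      rw [Nat.even_iff]
      omega
    have hpi : (i : ℚ) + e ≤ p := mod_cast hi
    have hqj : (j : ℚ) + e ≤ q := mod_cast hj
    have he' : (0 : ℚ) < e := mod_cast he
    have hpos : 0 < (p : ℚ) + q - i - j := by linarith
    rw [eq_div_iff hpos.ne', sum_Icc_mul_gammaCoef_mul_gammaCoef_eq_sub he (by omega) heven,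
      mul_assoc 2 (betaCoef p i (_ + 1)),
      betaCoef_mul_betaCoef_eq_zero_of_min_lt (Nat.lt_succ_self _), mul_zero, sub_zero]
  · have hodd : Odd (p + i + (q + j)) := by
      rw [Nat.odd_iff]
      omega
    refine Finset.sum_eq_zero fun a _ ↦ ?_
    rw [mul_assoc, gammaCoef_mul_gammaCoef_eq_zero_of_odd hodd, mul_zero]
end

section
/- Let p, q, e be positive integers and let i, j be natural numbers with i + e ≤ p, j + e ≤ q, e ≡ p − i (mod 2) and e ≡ q − j (mod 2). Then, in ℚ, (2/(p+q−i−j))·(β(p,i,e)·β(q,j,e) − β(p,i,e+1)·β(q,j,e+1)) = e·γ(p,i,e)·γ(q,j,e). -/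
/-!
When `p - i - e` is even, the factorials in `β(p,i,e)` and in `β(p,i,e+1)` each differ from those in
`γ(p,i,e)` by a single factor, namely `(p-i+e)/2` and `(p-i-e)/2` respectively. With `P = p - i` and
`Q = q - j` the claim thus reduces to `(P+e)(Q+e) - (P-e)(Q-e) = 2e(P+Q)`.
-/

section

variable {p i e : ℕ}

-- At `i = p`, `e = 0` the subtraction `p - i + e - 1` truncates and the left side is `1`, not `0`.
theorem betaCoef_eq_mul_gammaCoef (hip : i < p) (heven : Even (p - i - e)) :
    betaCoef p i e = ((p : ℚ) - i + e) / 2 * gammaCoef p i e := by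
  by_cases hle : i + e ≤ p
  · obtain ⟨k, hk⟩ : ∃ k, p + e = i + 2 * (k + 1) := by
      rw [Nat.even_iff] at heven
      exact ⟨(p - i + e) / 2 - 1, by omega⟩
    have hfactor : ((p : ℚ) - i + e) / 2 = k + 1 := by
      have hcast : (p : ℚ) + e = i + 2 * (k + 1) := mod_cast hk
      linarith
    rw [betaCoef, gammaCoef, if_pos hle, if_pos ⟨hle, Nat.even_iff.mp heven⟩, hfactor,
      show (p - i + e - 1) / 2 = k by omega, show (p - i + e) / 2 = k + 1 by omega,
      Nat.factorial_succ k]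
    push_cast
    field_simp
  · simp [betaCoef, gammaCoef, hle]

theorem betaCoef_succ_eq_mul_gammaCoef (heven : Even (p - i - e)) :
    betaCoef p i (e + 1) = ((p : ℚ) - i - e) / 2 * gammaCoef p i e := by
  rcases lt_trichotomy (i + e) p with hlt | rfl | hgt
  · obtain ⟨k, hk⟩ : ∃ k, p = i + e + 2 * (k + 1) := by
      rw [Nat.even_iff] at heven
      exact ⟨(p - i - e) / 2 - 1, by omega⟩
    have hfactor : ((p : ℚ) - i - e) / 2 = k + 1 := by
      rw [hk]
      push_cast
      ring
    rw [betaCoef, gammaCoef, if_pos (by omega), if_pos ⟨hlt.le, Nat.even_iff.mp heven⟩, hfactor,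
      show (p - i - (e + 1)) / 2 = k by omega, show (p - i - e) / 2 = k + 1 by omega,
      show p - i + (e + 1) - 1 = p - i + e by omega, Nat.factorial_succ k]
    push_cast
    field_simp
  · simp [betaCoef]
  · rw [betaCoef, gammaCoef, if_neg (by omega), if_neg (by omega), mul_zero]

end

/-- For positive integers `p, q, e` and naturals `i, j` with `i + e ≤ p`, `j + e ≤ q`,
`e ≡ p − i (mod 2)` and `e ≡ q − j (mod 2)`:
`(2/(p+q−i−j))·(β(p,i,e)·β(q,j,e) − β(p,i,e+1)·β(q,j,e+1)) = e·γ(p,i,e)·γ(q,j,e)`. -/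
theorem beta_diff_eq_gamma (p q e i j : ℕ) (hp : 0 < p) (hq : 0 < q) (he : 0 < e)
    (hi : i + e ≤ p) (hj : j + e ≤ q)
    (hpar1 : e % 2 = (p - i) % 2) (hpar2 : e % 2 = (q - j) % 2) :
    (2 / ((p : ℚ) + q - i - j)) *
        (betaCoef p i e * betaCoef q j e - betaCoef p i (e + 1) * betaCoef q j (e + 1)) =
      (e : ℚ) * gammaCoef p i e * gammaCoef q j e := by
  have hip : i < p := by omega
  have hjq : j < q := by omega
  have hevenP : Even (p - i - e) := Nat.even_iff.mpr (by omega)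
  have hevenQ : Even (q - j - e) := Nat.even_iff.mpr (by omega)
  have hsum_ne_zero : (p : ℚ) + q - i - j ≠ 0 := by
    have hip' : (i : ℚ) < p := mod_cast hip
    have hjq' : (j : ℚ) < q := mod_cast hjq
    exact ne_of_gt (by linarith)
  have hquadratic : ((p : ℚ) - i + e) * (q - j + e) - (p - i - e) * (q - j - e) =
      2 * e * (p + q - i - j) := by ring
  rw [betaCoef_eq_mul_gammaCoef hip hevenP, betaCoef_eq_mul_gammaCoef hjq hevenQ,
    betaCoef_succ_eq_mul_gammaCoef hevenP, betaCoef_succ_eq_mul_gammaCoef hevenQ]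
  rw [div_mul_eq_mul_div, div_eq_iff hsum_ne_zero]
  linear_combination gammaCoef p i e * gammaCoef q j e / 2 * hquadratic
end

section
/- For every integer d ≥ 1 and every finite set Δ of integers each ≥ d, the d-system for Δ has exactly one solution (W_{−2}, W_{−1}, …, W_d). -/
open MvPowerSeries in
/-- `W : ℤ → ℚ[[x_i : i ∈ Δ]]` (only the values `W_{−2}, …, W_d` are relevant) is a solution
of the `d`-system for `Δ` if: `W_{−2} = 1`; the constant term of `W_j` vanishes for
`−1 ≤ j ≤ d`; for `−2 ≤ j ≤ d−3`, `W_j = h_{j+2}(W_1, …, W_{d−1})`, i.e. the sum over all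
compositions `(c_1,…,c_r)` of `j+2` into positive parts of `W_{c_1}·…·W_{c_r}`; and for
`d−2 ≤ j ≤ d`, `W_j = [u^{j+2}] Σ_{i∈Δ} x_i u^i (1 + W_0 + u^{−1}W_{−1} + u^{−2})^{i−1}`,
written out as the sum over `i ∈ Δ` of `x_i` times the sum over pairs `(b,c)` of naturals
with `b + 2c = i − j − 2` and `b + c ≤ i − 1` of
`(i−1)!/((i−1−b−c)!·b!·c!)·(1+W_0)^{i−1−b−c}·W_{−1}^b`. -/
def IsDSystemSolution (d : ℕ) (Δ : Finset ℕ) (W : ℤ → MvPowerSeries ↥Δ ℚ) : Prop :=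
  W (-2) = 1 ∧
  (∀ j : ℤ, -1 ≤ j → j ≤ (d : ℤ) → constantCoeff (σ := ↥Δ) (R := ℚ) (W j) = 0) ∧
  (∀ j : ℤ, -2 ≤ j → j ≤ (d : ℤ) - 3 →
    W j = ∑ c : Composition (j + 2).toNat, ((c.blocks.map (fun k => W (k : ℤ))).prod)) ∧
  (∀ j : ℤ, (d : ℤ) - 2 ≤ j → j ≤ (d : ℤ) →
    W j = ∑ i ∈ Δ.attach,
      MvPowerSeries.X i *
        ∑ bc ∈ (Finset.range ((i : ℕ) + 1) ×ˢ Finset.range ((i : ℕ) + 1)).filter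
            (fun bc => (bc.1 : ℤ) + 2 * (bc.2 : ℤ) = ((i : ℕ) : ℤ) - j - 2 ∧
              bc.1 + bc.2 ≤ (i : ℕ) - 1),
          (C (σ := ↥Δ) (R := ℚ) ((((i : ℕ) - 1).factorial : ℚ) /
                ((((i : ℕ) - 1 - bc.1 - bc.2).factorial : ℚ) * (bc.1.factorial : ℚ) *
                  (bc.2.factorial : ℚ)))) *
            (1 + W 0) ^ ((i : ℕ) - 1 - bc.1 - bc.2) * (W (-1)) ^ bc.1)

/-!
Let `I` be the ideal generated by the variables, so that `ℚ[[x_i : i ∈ Δ]]` is `I`-adically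
complete and the unknowns `W_{−1}, …, W_d` are sought in `I`. Suppose two candidate families agree
modulo `I ^ n`. In the equations for `d − 2 ≤ j ≤ d` every term carries a factor `x_i ∈ I`, so the
right-hand sides agree modulo `I ^ (n + 1)`. For `−1 ≤ j ≤ d − 3` the same holds for the
compositions of `j + 2` with at least two parts, since the product of two elements of `I` gains one
power of `I`; the only other term is `W_{j+2}`, whose index is larger. Hence the system is a
contraction once its equations are used in order of decreasing `j`, and iterating it converges to
the unique solution.
-/

section AdicFixedPoint

variable {A ι : Type*} [CommRing A] {I : Ideal A}

/-- A self-map `F` of the families in `I` which improves congruences modulo `I ^ n` to congruences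
modulo `I ^ (n + 1)`, provided that in the `i`-th component the arguments of smaller rank are
already congruent modulo `I ^ (n + 1)`. For `rank = 0` this is a contraction in the `I`-adic
metric; in general it is the one-sweep map of a triangular system of equations. -/
structure IsTriangularContraction (I : Ideal A) (rank : ι → ℕ) (F : (ι → A) → ι → A) : Prop where
  mapsTo : ∀ W, (∀ i, W i ∈ I) → ∀ i, F W i ∈ I
  smodEq : ∀ V W n i, (∀ k, V k ∈ I) → (∀ k, W k ∈ I) → (∀ k, V k ≡ W k [SMOD I ^ n]) →
    (∀ k, rank k < rank i → V k ≡ W k [SMOD I ^ (n + 1)]) → F V i ≡ F W i [SMOD I ^ (n + 1)]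

theorem smodEq_pow_zero (x y : A) : x ≡ y [SMOD I ^ 0] := by
  rw [pow_zero, Ideal.one_eq_top]
  exact SModEq.top

theorem exists_forall_smodEq_pow [IsPrecomplete I A] {u : ℕ → A}
    (hu : ∀ n, u n ≡ u (n + 1) [SMOD I ^ n]) : ∃ L, ∀ n, u n ≡ L [SMOD I ^ n] := by
  have cauchy : AdicCompletion.IsAdicCauchy I A u :=
    (AdicCompletion.isAdicCauchy_iff I A u).2 <| by simpa only [smul_eq_mul, Ideal.mul_top] using hu
  simpa only [smul_eq_mul, Ideal.mul_top] using IsPrecomplete.prec ‹_› cauchy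

theorem eq_of_forall_smodEq_pow [IsHausdorff I A] {x y : A} (h : ∀ n, x ≡ y [SMOD I ^ n]) :
    x = y :=
  (IsHausdorff.eq_iff_smodEq (I := I)).2 <| by simpa only [smul_eq_mul, Ideal.mul_top] using h

namespace IsTriangularContraction

variable {rank : ι → ℕ} {F : (ι → A) → ι → A}

theorem iterate_mem (hF : IsTriangularContraction I rank F) {W : ι → A} (hW : ∀ i, W i ∈ I)
    (t : ℕ) : ∀ i, F^[t] W i ∈ I := by
  induction t with
  | zero => exact hW
  | succ t ih =>
    rw [Function.iterate_succ_apply']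
    exact hF.mapsTo _ ih

theorem smodEq_of_smodEq (hF : IsTriangularContraction I rank F) {V W : ι → A}
    (hV : ∀ i, V i ∈ I) (hW : ∀ i, W i ∈ I) {n : ℕ} (h : ∀ i, V i ≡ W i [SMOD I ^ n]) (i : ι) :
    F V i ≡ F W i [SMOD I ^ n] := by
  cases n with
  | zero => exact smodEq_pow_zero _ _
  | succ n =>
    exact hF.smodEq V W n i hV hW (fun k ↦ (h k).mono (Ideal.pow_le_pow_right n.le_succ))
      fun k _ ↦ h k

theorem iterate_smodEq (hF : IsTriangularContraction I rank F) {V W : ι → A}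
    (hV : ∀ i, V i ∈ I) (hW : ∀ i, W i ∈ I) {n : ℕ} (h : ∀ i, V i ≡ W i [SMOD I ^ n]) (t : ℕ) :
    (∀ i, F^[t] V i ≡ F^[t] W i [SMOD I ^ n]) ∧
      ∀ i, rank i < t → F^[t] V i ≡ F^[t] W i [SMOD I ^ (n + 1)] := by
  induction t with
  | zero => exact ⟨h, fun _ hi ↦ absurd hi (Nat.not_lt_zero _)⟩
  | succ t ih =>
    obtain ⟨all, ranked⟩ := ih
    simp only [Function.iterate_succ_apply']
    have hVt := hF.iterate_mem hV t
    have hWt := hF.iterate_mem hW t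
    exact ⟨hF.smodEq_of_smodEq hVt hWt all, fun i hi ↦ hF.smodEq _ _ n i hVt hWt all
      fun k hk ↦ ranked k (hk.trans_le (Nat.lt_succ_iff.1 hi))⟩

theorem iterate (hF : IsTriangularContraction I rank F) {N : ℕ} (hN : ∀ i, rank i < N) :
    IsTriangularContraction I 0 F^[N] where
  mapsTo _ hW := hF.iterate_mem hW N
  smodEq _ _ _ i hV hW h _ := (hF.iterate_smodEq hV hW h N).2 i (hN i)

theorem eq_of_isFixedPt [IsHausdorff I A] (hF : IsTriangularContraction I 0 F) {V W : ι → A}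
    (hV : ∀ i, V i ∈ I) (hW : ∀ i, W i ∈ I) (hFV : Function.IsFixedPt F V)
    (hFW : Function.IsFixedPt F W) : V = W := by
  have smodEq_pow (n : ℕ) : ∀ i, V i ≡ W i [SMOD I ^ n] := by
    induction n with
    | zero => exact fun i ↦ smodEq_pow_zero _ _
    | succ n ih =>
      intro i
      rw [← hFV, ← hFW]
      exact hF.smodEq V W n i hV hW ih fun k hk ↦ absurd hk (lt_irrefl _)
  exact funext fun i ↦ eq_of_forall_smodEq_pow fun n ↦ smodEq_pow n i

theorem exists_isFixedPt [IsAdicComplete I A] (hF : IsTriangularContraction I 0 F) :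
    ∃ W : ι → A, (∀ i, W i ∈ I) ∧ Function.IsFixedPt F W := by
  let u (n : ℕ) : ι → A := F^[n] 0
  have u_succ (n : ℕ) : u (n + 1) = F (u n) := Function.iterate_succ_apply' F n 0
  have u_mem (n : ℕ) : ∀ i, u n i ∈ I := hF.iterate_mem (fun _ ↦ I.zero_mem) n
  have cauchy (n : ℕ) : ∀ i, u n i ≡ u (n + 1) i [SMOD I ^ n] := by
    induction n with
    | zero => exact fun i ↦ smodEq_pow_zero _ _
    | succ n ih =>
      intro i
      rw [u_succ n, u_succ (n + 1)]
      exact hF.smodEq _ _ n i (u_mem n) (u_mem (n + 1)) ih fun k hk ↦ absurd hk (lt_irrefl _)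
  choose L hL using fun i ↦ exists_forall_smodEq_pow fun n ↦ cauchy n i
  have L_mem (i : ι) : L i ∈ I := by
    have hL_one : u 1 i ≡ L i [SMOD I] := by simpa only [pow_one] using hL i 1
    exact SModEq.zero.1 (hL_one.symm.trans (SModEq.zero.2 (u_mem 1 i)))
  refine ⟨L, L_mem, funext fun i ↦ eq_of_forall_smodEq_pow (I := I) fun n ↦ ?_⟩
  have F_smodEq : F (u n) i ≡ F L i [SMOD I ^ n] :=
    hF.smodEq_of_smodEq (u_mem n) L_mem (fun k ↦ hL k n) i
  rw [← u_succ] at F_smodEq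
  exact F_smodEq.symm.trans ((cauchy n i).symm.trans (hL i n))

theorem existsUnique_isFixedPt [IsAdicComplete I A] (hF : IsTriangularContraction I rank F)
    {N : ℕ} (hN : ∀ i, rank i < N) :
    ∃! W : ι → A, (∀ i, W i ∈ I) ∧ Function.IsFixedPt F W := by
  have hG := hF.iterate hN
  obtain ⟨W, hW, hGW⟩ := hG.exists_isFixedPt
  have hGFW : Function.IsFixedPt F^[N] (F W) := by
    rw [Function.IsFixedPt, ← Function.iterate_succ_apply, Function.iterate_succ_apply', hGW]
  refine ⟨W, ⟨hW, hG.eq_of_isFixedPt (hF.mapsTo W hW) hW hGFW hGW⟩, ?_⟩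
  rintro V ⟨hV, hFV⟩
  exact hG.eq_of_isFixedPt hV hW (hFV.iterate N) hGW

end IsTriangularContraction

end AdicFixedPoint

section CompositionSum

variable {A : Type*} [CommRing A] {I : Ideal A}

/-- The polynomial `h_n(w_1, …, w_n)`: the sum over all compositions `(c_1, …, c_r)` of `n` of
`w_{c_1} ⋯ w_{c_r}`. -/
def compositionSum (w : ℕ → A) (n : ℕ) : A :=
  ∑ c : Composition n, (c.blocks.map w).prod

theorem compositionSum_zero (w : ℕ → A) : compositionSum w 0 = 1 := by
  have blocks_eq_nil (c : Composition 0) : c.blocks = [] := c.blocks_eq_nil.2 rfl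
  simp [compositionSum, blocks_eq_nil, composition_card]

theorem compositionSum_congr {v w : ℕ → A} {n : ℕ} (h : ∀ k, 1 ≤ k → k ≤ n → v k = w k) :
    compositionSum v n = compositionSum w n :=
  Finset.sum_congr rfl fun c _ ↦ congrArg List.prod <|
    List.map_congr_left fun k hk ↦ h k (c.one_le_blocks hk) (c.blocks_le hk)

theorem list_prod_map_mem {α : Type*} {w : α → A} (hw : ∀ a, w a ∈ I) {l : List α} (hl : l ≠ []) :
    (l.map w).prod ∈ I := by
  obtain ⟨a, ha⟩ := List.exists_mem_of_ne_nil l hl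
  exact I.mem_of_dvd (List.dvd_prod (List.mem_map_of_mem ha)) (hw a)

theorem compositionSum_mem {w : ℕ → A} (hw : ∀ k, w k ∈ I) {n : ℕ} (hn : n ≠ 0) :
    compositionSum w n ∈ I :=
  I.sum_mem fun c _ ↦ list_prod_map_mem hw fun hc ↦ hn (c.blocks_eq_nil.1 hc)

theorem list_prod_map_smodEq {α : Type*} {v w : α → A} (h : ∀ a, v a ≡ w a [SMOD I])
    (l : List α) : (l.map v).prod ≡ (l.map w).prod [SMOD I] := by
  induction l with
  | nil => rfl
  | cons a l ih => simpa only [List.map_cons, List.prod_cons] using (h a).mul ih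

theorem mul_smodEq_mul_pow_succ {x x' y y' : A} {n : ℕ} (hx' : x' ∈ I) (hy : y ∈ I)
    (hxx' : x ≡ x' [SMOD I ^ n]) (hyy' : y ≡ y' [SMOD I ^ n]) :
    x * y ≡ x' * y' [SMOD I ^ (n + 1)] := by
  rw [SModEq.sub_mem] at *
  rw [show x * y - x' * y' = (x - x') * y + (y - y') * x' by ring, pow_succ]
  exact add_mem (Ideal.mul_mem_mul hxx' hy) (Ideal.mul_mem_mul hyy' hx')

theorem compositionSum_smodEq {v w : ℕ → A} (hv : ∀ k, v k ∈ I) (hw : ∀ k, w k ∈ I) {m n : ℕ}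
    (hn : n ≠ 0) (h : ∀ k, v k ≡ w k [SMOD I ^ m]) (h_top : v n ≡ w n [SMOD I ^ (m + 1)]) :
    compositionSum v n ≡ compositionSum w n [SMOD I ^ (m + 1)] := by
  refine SModEq.sum fun c _ ↦ ?_
  have blocks_sum := c.blocks_sum
  match hc : c.blocks with
  | [] => exact absurd (c.blocks_eq_nil.1 hc) hn
  | [a] =>
    obtain rfl : a = n := by simpa [hc] using blocks_sum
    simpa using h_top
  | a :: b :: l =>
    rw [List.map_cons, List.map_cons (f := w), List.prod_cons, List.prod_cons]
    exact mul_smodEq_mul_pow_succ (hw a) (list_prod_map_mem hv (List.cons_ne_nil b l)) (h a)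
      (list_prod_map_smodEq h (b :: l))

end CompositionSum

section DSystemMap

variable {A : Type*} [CommRing A] [Algebra ℚ A] {I : Ideal A} {Δ : Finset ℕ} {x : Δ → A}

/-- The coefficient `[u^{j+2}] Σ_{i ∈ Δ} x_i u^i (1 + y + u⁻¹ z + u⁻²)^{i−1}`, expanded by the
trinomial theorem: `(b, c)` records how often the terms `u⁻¹ z` and `u⁻²` are picked. -/
def laurentCoeff (x : Δ → A) (y z : A) (j : ℤ) : A :=
  ∑ i ∈ Δ.attach, x i *
    ∑ bc ∈ (Finset.range ((i : ℕ) + 1) ×ˢ Finset.range ((i : ℕ) + 1)).filter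
        (fun bc ↦ (bc.1 : ℤ) + 2 * (bc.2 : ℤ) = ((i : ℕ) : ℤ) - j - 2 ∧
          bc.1 + bc.2 ≤ (i : ℕ) - 1),
      algebraMap ℚ A ((((i : ℕ) - 1).factorial : ℚ) /
          ((((i : ℕ) - 1 - bc.1 - bc.2).factorial : ℚ) * (bc.1.factorial : ℚ) *
            (bc.2.factorial : ℚ))) *
        (1 + y) ^ ((i : ℕ) - 1 - bc.1 - bc.2) * z ^ bc.1

theorem laurentCoeff_mem (hx : ∀ i, x i ∈ I) (y z : A) (j : ℤ) : laurentCoeff x y z j ∈ I :=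
  I.sum_mem fun i _ ↦ I.mul_mem_right _ (hx i)

theorem laurentCoeff_smodEq (hx : ∀ i, x i ∈ I) {y y' z z' : A} {n : ℕ}
    (hy : y ≡ y' [SMOD I ^ n]) (hz : z ≡ z' [SMOD I ^ n]) (j : ℤ) :
    laurentCoeff x y z j ≡ laurentCoeff x y' z' j [SMOD I ^ (n + 1)] := by
  refine SModEq.sum fun i _ ↦ ?_
  rw [SModEq.sub_mem, ← mul_sub, pow_succ']
  refine Ideal.mul_mem_mul (hx i) (SModEq.sub_mem.1 (SModEq.sum fun bc _ ↦ ?_))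
  exact (SModEq.rfl.mul ((SModEq.rfl.add hy).pow _)).mul (hz.pow _)

/-- The right-hand sides of the `d`-system for the unknowns `W_{−1}, …, W_d`, with arbitrary ring
elements `x_i` in place of the variables. Components outside `−1 ≤ j ≤ d` are set to `0`; in
particular the normalisation `W_{−2} = 1`, on which no other equation depends, is left out. -/
noncomputable def dSystemMap (d : ℕ) (x : Δ → A) (W : ℤ → A) : ℤ → A :=
  (Set.Icc (-1) (d : ℤ)).indicator fun j ↦
    if j ≤ (d : ℤ) - 3 then compositionSum (fun k : ℕ ↦ W k) (j + 2).toNat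
    else laurentCoeff x (W 0) (W (-1)) j

theorem dSystemMap_of_le {d : ℕ} {j : ℤ} (hj : -1 ≤ j) (hjd : j ≤ (d : ℤ) - 3) (W : ℤ → A) :
    dSystemMap d x W j = compositionSum (fun k : ℕ ↦ W k) (j + 2).toNat := by
  have hj_mem : j ∈ Set.Icc (-1) (d : ℤ) := ⟨hj, by omega⟩
  rw [dSystemMap, Set.indicator_of_mem hj_mem, if_pos hjd]

theorem dSystemMap_of_lt {d : ℕ} {j : ℤ} (hj : j ∈ Set.Icc (-1) (d : ℤ)) (hjd : (d : ℤ) - 3 < j)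
    (W : ℤ → A) : dSystemMap d x W j = laurentCoeff x (W 0) (W (-1)) j := by
  rw [dSystemMap, Set.indicator_of_mem hj, if_neg hjd.not_ge]

theorem dSystemMap_congr {d : ℕ} {V W : ℤ → A} (h : Set.EqOn V W (Set.Icc (-1) d)) :
    dSystemMap d x V = dSystemMap d x W := by
  refine Set.indicator_congr fun j _ ↦ ?_
  rw [h ⟨by omega, by omega⟩, h ⟨le_rfl, by omega⟩]
  refine ite_congr rfl (fun hjd ↦ compositionSum_congr fun k hk hkj ↦ h ⟨?_, ?_⟩) fun _ ↦ rfl <;>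
    omega

theorem isTriangularContraction_dSystemMap (d : ℕ) (hx : ∀ i, x i ∈ I) :
    IsTriangularContraction I (fun j : ℤ ↦ min (d - j).toNat (d + 1)) (dSystemMap d x) where
  mapsTo W hW j := by
    rw [dSystemMap, Set.indicator_apply]
    split_ifs with hj hjd
    · have hj_ne : (j + 2).toNat ≠ 0 := by grind
      exact compositionSum_mem (fun k ↦ hW k) hj_ne
    · exact laurentCoeff_mem hx _ _ _
    · exact I.zero_mem
  smodEq V W n j hV hW h h_rank := by
    simp only [dSystemMap, Set.indicator_apply]
    split_ifs with hj hjd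
    · rw [Set.mem_Icc] at hj
      have h_top : V (j + 2).toNat ≡ W (j + 2).toNat [SMOD I ^ (n + 1)] :=
        h_rank _ (by omega)
      exact compositionSum_smodEq (fun k ↦ hV k) (fun k ↦ hW k) (by omega) (fun k ↦ h k) h_top
    · exact laurentCoeff_smodEq hx (h 0) (h (-1)) j
    · rfl

theorem existsUnique_isFixedPt_dSystemMap [IsAdicComplete I A] (d : ℕ) (hx : ∀ i, x i ∈ I) :
    ∃! W : ℤ → A, (∀ j, W j ∈ I) ∧ Function.IsFixedPt (dSystemMap d x) W :=
  (isTriangularContraction_dSystemMap d hx).existsUnique_isFixedPt (N := d + 2) fun j ↦ by omega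

theorem isFixedPt_dSystemMap_indicator {d : ℕ} {W : ℤ → A}
    (h : Set.EqOn W (dSystemMap d x W) (Set.Icc (-1) d)) :
    Function.IsFixedPt (dSystemMap d x) ((Set.Icc (-1) (d : ℤ)).indicator W) := by
  calc dSystemMap d x ((Set.Icc (-1) (d : ℤ)).indicator W)
      = dSystemMap d x W := dSystemMap_congr Set.eqOn_indicator
    _ = (Set.Icc (-1) (d : ℤ)).indicator (dSystemMap d x W) := by
      simp only [dSystemMap, Set.indicator_indicator, Set.inter_self]
    _ = (Set.Icc (-1) (d : ℤ)).indicator W := Set.indicator_congr fun j hj ↦ (h hj).symm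

end DSystemMap

section PowerSeries

open MvPowerSeries

theorem mem_span_range_X_iff {σ R : Type*} [Finite σ] [CommRing R] {f : MvPowerSeries σ R} :
    f ∈ Ideal.span (Set.range (X : σ → MvPowerSeries σ R)) ↔ constantCoeff f = 0 := by
  classical
  have := Fintype.ofFinite σ
  constructor
  · intro hf
    have span_le : Ideal.span (Set.range X) ≤ RingHom.ker (constantCoeff (σ := σ) (R := R)) :=
      Ideal.span_le.2 (Set.range_subset_iff.2 constantCoeff_X)
    exact span_le hf
  · intro hf
    -- Choose a variable in every nontrivial monomial and split `f` according to this choice.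
    have exists_var (m : σ →₀ ℕ) (hm : m ≠ 0) : ∃ s, m s ≠ 0 := Finsupp.ne_iff.1 hm
    choose var hvar using exists_var
    let part (s : σ) : MvPowerSeries σ R :=
      fun m ↦ if hm : m = 0 then 0 else if var m hm = s then coeff m f else 0
    have coeff_part (s : σ) (m : σ →₀ ℕ) : coeff m (part s) =
        if hm : m = 0 then 0 else if var m hm = s then coeff m f else 0 := rfl
    have X_dvd_part (s : σ) : X s ∣ part s := by
      refine X_dvd_iff.2 fun m hms ↦ ?_
      rw [coeff_part]
      split_ifs with hm hs
      · rfl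
      · exact absurd (hs ▸ hms) (hvar m hm)
      · rfl
    have sum_part : ∑ s, part s = f := by
      ext m
      by_cases hm : m = 0
      · simp [coeff_part, hm, hf]
      · simp [coeff_part, hm]
    rw [← sum_part]
    exact Ideal.sum_mem _ fun s _ ↦
      Ideal.mem_of_dvd _ (X_dvd_part s) (Ideal.subset_span (Set.mem_range_self s))

variable {d : ℕ} {Δ : Finset ℕ} {W : ℤ → MvPowerSeries Δ ℚ}

-- On the left the cast is applied to the list of blocks, not to its elements: this is how the
-- sum in `IsDSystemSolution` elaborates.
theorem sum_prod_map_blocks_eq_compositionSum {A : Type*} [CommRing A] (W : ℤ → A) (n : ℕ) :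
    ∑ c : Composition n, (c.blocks.map (fun k ↦ W (k : ℤ))).prod =
      compositionSum (fun k : ℕ ↦ W k) n := by
  simp [compositionSum, ← List.map_eq_flatMap, Function.comp_def]

theorem isDSystemSolution_iff (hd : 1 ≤ d) :
    IsDSystemSolution d Δ W ↔ W (-2) = 1 ∧ ∀ j ∈ Set.Icc (-1) (d : ℤ),
      constantCoeff (W j) = 0 ∧ W j = dSystemMap d X W j := by
  simp only [IsDSystemSolution, sum_prod_map_blocks_eq_compositionSum]
  constructor
  · rintro ⟨norm, const, comp, laurent⟩
    refine ⟨norm, fun j hj ↦ ⟨const j hj.1 hj.2, ?_⟩⟩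
    rcases le_or_gt j (d - 3) with hjd | hjd
    · rw [dSystemMap_of_le hj.1 hjd]
      exact comp j (by grind) hjd
    · rw [dSystemMap_of_lt hj hjd]
      exact laurent j (by omega) hj.2
  · rintro ⟨norm, h⟩
    refine ⟨norm, fun j hj hjd ↦ (h j ⟨hj, hjd⟩).1, fun j hj hjd ↦ ?_, fun j hj hjd ↦ ?_⟩
    · rcases hj.eq_or_lt with rfl | hj
      · exact norm.trans (compositionSum_zero _).symm
      · exact (h j ⟨hj, by omega⟩).2.trans (dSystemMap_of_le hj hjd W)
    · have hj_mem : j ∈ Set.Icc (-1) (d : ℤ) := ⟨by omega, hjd⟩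
      exact (h j hj_mem).2.trans (dSystemMap_of_lt hj_mem (by omega) W)

end PowerSeries

theorem dSystem_exists_unique_general (d : ℕ) (hd : 1 ≤ d) (Δ : Finset ℕ) :
    ∃ W : ℤ → MvPowerSeries ↥Δ ℚ, IsDSystemSolution d Δ W ∧
      ∀ W' : ℤ → MvPowerSeries ↥Δ ℚ, IsDSystemSolution d Δ W' →
        ∀ j : ℤ, -2 ≤ j → j ≤ (d : ℤ) → W' j = W j := by
  obtain ⟨U, ⟨hU_mem, hU_fixed⟩, hU_unique⟩ := existsUnique_isFixedPt_dSystemMap d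
    fun i : Δ ↦ Ideal.subset_span (Set.mem_range_self (f := MvPowerSeries.X (R := ℚ)) i)
  have update_eqOn : Set.EqOn (Function.update U (-2) 1) U (Set.Icc (-1) d) :=
    fun j hj ↦ Function.update_of_ne (by grind) _ _
  refine ⟨Function.update U (-2) 1, (isDSystemSolution_iff hd).2 ⟨by simp, fun j hj ↦ ?_⟩, ?_⟩
  · rw [update_eqOn hj, dSystemMap_congr update_eqOn, hU_fixed]
    exact ⟨mem_span_range_X_iff.1 (hU_mem j), rfl⟩
  · intro W' hW' j hj hjd
    obtain ⟨hW'_norm, hW'_eq⟩ := (isDSystemSolution_iff hd).1 hW'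
    have indicator_mem (k : ℤ) : (Set.Icc (-1) (d : ℤ)).indicator W' k ∈
        Ideal.span (Set.range MvPowerSeries.X) := by
      rw [Set.indicator_apply]
      split_ifs with hk
      exacts [mem_span_range_X_iff.2 (hW'_eq k hk).1, Ideal.zero_mem _]
    have indicator_eq : (Set.Icc (-1) (d : ℤ)).indicator W' = U :=
      hU_unique _ ⟨indicator_mem, isFixedPt_dSystemMap_indicator fun k hk ↦ (hW'_eq k hk).2⟩
    rcases hj.eq_or_lt with rfl | hj
    · rw [hW'_norm, Function.update_self]
    · have hj_mem : j ∈ Set.Icc (-1) (d : ℤ) := ⟨hj, hjd⟩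
      rw [update_eqOn hj_mem, ← indicator_eq, Set.indicator_of_mem hj_mem]

/-- For every integer `d ≥ 1` and finite set `Δ` of integers each `≥ d`, the `d`-system for
`Δ` has exactly one solution `(W_{−2}, W_{−1}, …, W_d)`. -/
theorem dSystem_exists_unique (d : ℕ) (hd : 1 ≤ d) (Δ : Finset ℕ) (hΔ : ∀ i ∈ Δ, d ≤ i) :
    ∃ W : ℤ → MvPowerSeries ↥Δ ℚ, IsDSystemSolution d Δ W ∧
      ∀ W' : ℤ → MvPowerSeries ↥Δ ℚ, IsDSystemSolution d Δ W' →
        ∀ j : ℤ, -2 ≤ j → j ≤ (d : ℤ) → W' j = W j :=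
  dSystem_exists_unique_general d hd Δ
end

section
/- Let d ≥ 1 be an integer and let Δ be a finite set of integers each ≥ d. Every member W_j (−2 ≤ j ≤ d) of the unique solution of the d-system for Δ is algebraic over the polynomial ring ℚ[x_i : i ∈ Δ]: there exists a nonzero one-variable polynomial P with coefficients in ℚ[x_i : i ∈ Δ] such that P(W_j) = 0 in the power series ring ℚ[[x_i : i ∈ Δ]]. -/
/-!
Let `R = ℚ[x_i]` and `A = ℚ[[x_i]]`. Differentiating the `d`-system over `R` expresses each `dW_j`
as a combination of the `dW_k` with coefficients in the maximal ideal of `A`: in the top equations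
the coefficients are multiples of the `x_i`; in the lower ones `dW_j` is `dW_{j+2}`, coming from the
one-part composition, plus terms from products of at least two `W_k`. By Nakayama's lemma the
submodule of `Ω[A⁄R]` spanned by the `dW_j` vanishes. In characteristic zero an element with
vanishing differential is algebraic: were it transcendental, `Frac A` would be formally smooth over
the polynomial ring it generates, so its differential would remain nonzero in `Ω[Frac A⁄R]`.
-/

open scoped TensorProduct

section DifferentialCriterion

open Polynomial KaehlerDifferential

theorem formallySmooth_of_faithfulSMul_of_charZero (B F : Type*) [CommRing B] [Field F]
    [CharZero F] [Algebra B F] [FaithfulSMul B F] : Algebra.FormallySmooth B F := by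
  have : IsDomain B := (FaithfulSMul.algebraMap_injective B F).isDomain
  let := FractionRing.liftAlgebra B F
  have : CharZero (FractionRing B) :=
    (RingHom.charZero_iff (algebraMap (FractionRing B) F).injective).2 inferInstance
  obtain ⟨ι, v, hv⟩ := exists_isTranscendenceBasis' (FractionRing B) F
  have : Algebra.IsAlgebraic (IntermediateField.adjoin (FractionRing B) (Set.range v)) F :=
    hv.isAlgebraic_field
  have : Algebra.FormallySmooth (FractionRing B) F :=
    .of_algebraicIndependent_of_isSeparable hv.1
  have : Algebra.FormallySmooth B (FractionRing B) := .of_isLocalization (nonZeroDivisors B)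
  exact .comp B (FractionRing B) F

theorem mapBaseChange_injective_of_formallySmooth (R B C : Type*) [CommRing R] [CommRing B]
    [CommRing C] [Algebra R B] [Algebra R C] [Algebra B C] [IsScalarTower R B C]
    [Algebra.FormallySmooth B C] : Function.Injective (mapBaseChange R B C) := by
  refine (injective_iff_map_eq_zero _).2 fun t ht => ?_
  obtain ⟨y, rfl⟩ := (Algebra.H1Cotangent.exact_δ_mapBaseChange R B C t).1 ht
  rw [Subsingleton.elim y 0, map_zero]

theorem one_tmul_D_X_ne_zero (R C : Type*) [CommRing R] [CommRing C] [Nontrivial C]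
    [Algebra R[X] C] : (1 : C) ⊗ₜ[R[X]] D R R[X] X ≠ 0 := fun h => by
  simpa using congrArg
    (TensorProduct.rid R[X] C ∘ (polynomialEquiv R).toLinearMap.lTensor C) h

theorem isAlgebraic_of_D_eq_zero_of_field {R F : Type*} [CommRing R] [Field F] [CharZero F]
    [Algebra R F] {x : F} (hx : D R F x = 0) : IsAlgebraic R x := by
  by_contra htr
  let := (aeval (R := R) x).toAlgebra
  have : IsScalarTower R R[X] F := .of_algebraMap_eq fun r => (aeval_C x r).symm
  have : FaithfulSMul R[X] F :=
    (faithfulSMul_iff_algebraMap_injective _ _).2 (transcendental_iff_injective.1 htr)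
  have := formallySmooth_of_faithfulSMul_of_charZero R[X] F
  refine one_tmul_D_X_ne_zero R F (mapBaseChange_injective_of_formallySmooth R R[X] F ?_)
  have algebraMap_X : algebraMap R[X] F X = x := aeval_X x
  rw [mapBaseChange_tmul, map_D, algebraMap_X, hx, smul_zero, map_zero]

variable {R A : Type*} [CommRing R] [CommRing A] [IsDomain A] [CharZero A] [Algebra R A]

theorem isAlgebraic_of_D_eq_zero {a : A} (ha : D R A a = 0) : IsAlgebraic R a := by
  have : CharZero (FractionRing A) := IsFractionRing.charZero_of_isFractionRing A
  have hD : D R (FractionRing A) (algebraMap A _ a) = 0 := by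
    rw [← map_D R R, ha, map_zero]
  exact (isAlgebraic_algebraMap_iff (IsFractionRing.injective A _)).1
    (isAlgebraic_of_D_eq_zero_of_field hD)

theorem isAlgebraic_of_D_mem_jacobson_smul_span {s : Set A} (hs : s.Finite)
    (hD : ∀ a ∈ s, D R A a ∈ Ideal.jacobson (⊥ : Ideal A) • Submodule.span A (D R A '' s))
    {a : A} (ha : a ∈ s) : IsAlgebraic R a := by
  have span_eq_bot : Submodule.span A (D R A '' s) = ⊥ :=
    Submodule.eq_bot_of_le_smul_of_le_jacobson_bot _ _ (Submodule.fg_span (hs.image _))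
      (Submodule.span_le.2 (Set.forall_mem_image.2 hD)) le_rfl
  exact isAlgebraic_of_D_eq_zero
    (Submodule.span_eq_bot.1 span_eq_bot _ (Set.mem_image_of_mem _ ha))

end DifferentialCriterion

section Derivation

variable {R A M : Type*} [CommRing R] [CommRing A] [Algebra R A] [AddCommGroup M] [Module A M]
  [Module R M] (δ : Derivation R A M) (N : Submodule A M)

/-- The subalgebra of elements whose derivative lies in a submodule `N`, i.e. the constants of the
derivation induced by `δ` modulo `N`. -/
def subalgebraOfDerivativeMem : Subalgebra R A where
  carrier := {a | δ a ∈ N}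
  add_mem' ha hb := by simpa only [Set.mem_ofPred_eq, map_add] using N.add_mem ha hb
  mul_mem' ha hb := by
    simpa only [Set.mem_ofPred_eq, δ.leibniz] using
      N.add_mem (N.smul_mem _ hb) (N.smul_mem _ ha)
  algebraMap_mem' r := by simp only [Set.mem_ofPred_eq, δ.map_algebraMap, N.zero_mem]

variable {δ N} {I : Ideal A}

theorem derivation_mul_mem_smul {a b : A} (ha : a ∈ I) (hb : b ∈ I)
    (hδa : a ∈ subalgebraOfDerivativeMem δ N) (hδb : b ∈ subalgebraOfDerivativeMem δ N) :
    δ (a * b) ∈ I • N := by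
  rw [δ.leibniz]
  exact add_mem (Submodule.smul_mem_smul ha hδb) (Submodule.smul_mem_smul hb hδa)

theorem derivation_list_prod_mem_smul {l : List A} (hl : 2 ≤ l.length) (hI : ∀ a ∈ l, a ∈ I)
    (hδ : ∀ a ∈ l, a ∈ subalgebraOfDerivativeMem δ N) : δ l.prod ∈ I • N := by
  match l, hl with
  | a :: b :: t, _ =>
    rw [List.forall_mem_cons] at hI hδ
    refine derivation_mul_mem_smul hI.1 ?_ hδ.1 (list_prod_mem hδ.2)
    exact I.mul_mem_right _ (hI.2 b List.mem_cons_self)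

theorem derivation_sum_composition_mem_smul {n : ℕ} (hn : 0 < n) {w : ℕ → A}
    (hI : ∀ k ∈ Set.Icc 1 n, w k ∈ I)
    (hδ : ∀ k ∈ Set.Icc 1 n, w k ∈ subalgebraOfDerivativeMem δ N) (hw : δ (w n) ∈ I • N) :
    δ (∑ c : Composition n, (c.blocks.map w).prod) ∈ I • N := by
  rw [map_sum]
  refine sum_mem fun c _ => ?_
  obtain rfl | hc := eq_or_ne c (Composition.single n hn)
  · simpa using hw
  have two_le_length : 2 ≤ c.length := by
    have := c.length_pos_of_pos hn
    have := mt (Composition.eq_single_iff_length hn).2 hc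
    omega
  have blocks_mem : ∀ k ∈ c.blocks, k ∈ Set.Icc 1 n :=
    fun k hk => ⟨c.one_le_blocks hk, c.blocks_le hk⟩
  exact derivation_list_prod_mem_smul (by simpa using two_le_length)
    (List.forall_mem_map.2 fun k hk => hI k (blocks_mem k hk))
    (List.forall_mem_map.2 fun k hk => hδ k (blocks_mem k hk))

end Derivation

section PowerSeries

theorem mem_jacobson_bot_of_constantCoeff_eq_zero {σ R : Type*} [CommRing R]
    {f : MvPowerSeries σ R} (hf : MvPowerSeries.constantCoeff f = 0) :
    f ∈ Ideal.jacobson (⊥ : Ideal _) :=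
  Ideal.mem_jacobson_bot.2 fun g => MvPowerSeries.isUnit_iff_constantCoeff.2 (by simp [hf])

variable {σ R : Type*} [CommSemiring R]

theorem algebraMap_eq_coeToMvPowerSeries_ringHom :
    algebraMap (MvPolynomial σ R) (MvPowerSeries σ R) =
      MvPolynomial.coeToMvPowerSeries.ringHom := by
  refine RingHom.ext fun p => ?_
  rw [MvPowerSeries.algebraMap_apply', Algebra.algebraMap_self, MvPowerSeries.map_id,
    RingHom.id_apply, MvPolynomial.coeToMvPowerSeries.ringHom_apply]

theorem coe_mvPolynomial_mem (S : Subalgebra (MvPolynomial σ R) (MvPowerSeries σ R))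
    (p : MvPolynomial σ R) : (p : MvPowerSeries σ R) ∈ S := by
  rw [← MvPolynomial.coeToMvPowerSeries.ringHom_apply, ← algebraMap_eq_coeToMvPowerSeries_ringHom]
  exact S.algebraMap_mem p

end PowerSeries

namespace IsDSystemSolution

variable {d : ℕ} {Δ : Finset ℕ} {W : ℤ → MvPowerSeries ↥Δ ℚ} {j : ℤ}

theorem mem_jacobson_bot (hW : IsDSystemSolution d Δ W) (hj : j ∈ Set.Icc (-1) (d : ℤ)) :
    W j ∈ Ideal.jacobson (⊥ : Ideal _) :=
  mem_jacobson_bot_of_constantCoeff_eq_zero (hW.2.1 j hj.1 hj.2)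

-- In `IsDSystemSolution` the map acts on `c.blocks` coerced to a list of integers.
theorem eq_sum_composition (hW : IsDSystemSolution d Δ W) (hj : -2 ≤ j) (hjd : j ≤ d - 3) :
    W j = ∑ c : Composition (j + 2).toNat, (c.blocks.map fun k : ℕ => W k).prod := by
  rw [hW.2.2.1 j hj hjd]
  simp [Function.comp_def, ← List.map_eq_flatMap]

section Derivation

variable {M : Type*} [AddCommGroup M] [Module (MvPowerSeries ↥Δ ℚ) M]
  [Module (MvPolynomial ↥Δ ℚ) M]
  {δ : Derivation (MvPolynomial ↥Δ ℚ) (MvPowerSeries ↥Δ ℚ) M}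
  {N : Submodule (MvPowerSeries ↥Δ ℚ) M}

theorem derivation_mem_smul_of_le (hW : IsDSystemSolution d Δ W)
    (hδ : ∀ k ∈ Set.Icc (-1) (d : ℤ), W k ∈ subalgebraOfDerivativeMem δ N)
    (hj : -1 ≤ j) (hjd : j ≤ d - 3)
    (hj' : δ (W (j + 2)) ∈ Ideal.jacobson (⊥ : Ideal (MvPowerSeries ↥Δ ℚ)) • N) :
    δ (W j) ∈ Ideal.jacobson (⊥ : Ideal (MvPowerSeries ↥Δ ℚ)) • N := by
  have index_mem : ∀ k ∈ Set.Icc 1 (j + 2).toNat, (k : ℤ) ∈ Set.Icc (-1) (d : ℤ) := by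
    rintro k ⟨hk, hkj⟩
    constructor <;> omega
  rw [hW.eq_sum_composition (by omega) hjd]
  refine derivation_sum_composition_mem_smul (by omega)
    (fun k hk => hW.mem_jacobson_bot (index_mem k hk)) (fun k hk => hδ k (index_mem k hk)) ?_
  rwa [Int.toNat_of_nonneg (by omega)]

theorem derivation_mem_smul_of_ge (hW : IsDSystemSolution d Δ W)
    (hδ : ∀ k ∈ Set.Icc (-1) (d : ℤ), W k ∈ subalgebraOfDerivativeMem δ N)
    (hdj : d - 2 ≤ j) (hjd : j ≤ d) :
    δ (W j) ∈ Ideal.jacobson (⊥ : Ideal (MvPowerSeries ↥Δ ℚ)) • N := by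
  have C_mem (q : ℚ) : MvPowerSeries.C q ∈ subalgebraOfDerivativeMem δ N := by
    simpa using coe_mvPolynomial_mem (subalgebraOfDerivativeMem δ N) (MvPolynomial.C q)
  have δX (i : ↥Δ) : δ (MvPowerSeries.X i) = 0 := by
    simpa [subalgebraOfDerivativeMem] using
      coe_mvPolynomial_mem (subalgebraOfDerivativeMem δ ⊥) (MvPolynomial.X i)
  have W_zero_mem := hδ 0 ⟨by omega, by omega⟩
  have W_neg_one_mem := hδ (-1) ⟨le_rfl, by omega⟩
  rw [hW.2.2.2 j hdj hjd, map_sum]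
  refine sum_mem fun i _ => ?_
  rw [δ.leibniz, δX, smul_zero, add_zero]
  have X_mem : MvPowerSeries.X i ∈ Ideal.jacobson (⊥ : Ideal (MvPowerSeries ↥Δ ℚ)) :=
    mem_jacobson_bot_of_constantCoeff_eq_zero (MvPowerSeries.constantCoeff_X i)
  refine Submodule.smul_mem_smul X_mem
    (sum_mem (S := subalgebraOfDerivativeMem δ N) fun bc _ => ?_)
  exact mul_mem (mul_mem (C_mem _) (pow_mem (add_mem (one_mem _) W_zero_mem) _))
    (pow_mem W_neg_one_mem _)

theorem derivation_mem_smul (hW : IsDSystemSolution d Δ W)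
    (hδ : ∀ k ∈ Set.Icc (-1) (d : ℤ), W k ∈ subalgebraOfDerivativeMem δ N) (j : ℤ)
    (hj : -1 ≤ j) (hjd : j ≤ d) :
    δ (W j) ∈ Ideal.jacobson (⊥ : Ideal (MvPowerSeries ↥Δ ℚ)) • N := by
  by_cases hjd' : j ≤ d - 3
  · exact hW.derivation_mem_smul_of_le hδ hj hjd'
      (hW.derivation_mem_smul hδ (j + 2) (by omega) (by omega))
  · exact hW.derivation_mem_smul_of_ge hδ (by omega) hjd
termination_by (d - j).toNat

end Derivation

theorem isAlgebraic (hW : IsDSystemSolution d Δ W) (hj : -2 ≤ j) (hjd : j ≤ d) :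
    IsAlgebraic (MvPolynomial ↥Δ ℚ) (W j) := by
  obtain rfl | hj : j = -2 ∨ -1 ≤ j := by omega
  · exact hW.1 ▸ isAlgebraic_one
  have : IsDomain (MvPowerSeries ↥Δ ℚ) := NoZeroDivisors.to_isDomain _
  have : CharZero (MvPowerSeries ↥Δ ℚ) := algebraRat.charZero _
  refine isAlgebraic_of_D_mem_jacobson_smul_span ((Set.finite_Icc (-1) (d : ℤ)).image W) ?_
    (Set.mem_image_of_mem W ⟨hj, hjd⟩)
  refine Set.forall_mem_image.2 fun k hk => hW.derivation_mem_smul (fun l hl => ?_) k hk.1 hk.2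
  exact Submodule.subset_span (Set.mem_image_of_mem _ (Set.mem_image_of_mem W hl))

end IsDSystemSolution

/-- For `d ≥ 1` and `Δ` a finite set of integers each `≥ d`, every member `W_j`
(`−2 ≤ j ≤ d`) of the (unique) solution of the `d`-system for `Δ` is algebraic over the
polynomial ring `ℚ[x_i : i ∈ Δ]`: there is a nonzero one-variable polynomial `P` with
coefficients in `ℚ[x_i : i ∈ Δ]` such that `P(W_j) = 0` in `ℚ[[x_i : i ∈ Δ]]` (the
polynomial ring being embedded canonically into the power series ring). -/
theorem dSystem_algebraic (d : ℕ) (hd : 1 ≤ d) (Δ : Finset ℕ) (hΔ : ∀ i ∈ Δ, d ≤ i)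
    (W : ℤ → MvPowerSeries ↥Δ ℚ) (hW : IsDSystemSolution d Δ W) :
    ∀ j : ℤ, -2 ≤ j → j ≤ (d : ℤ) →
      ∃ P : Polynomial (MvPolynomial ↥Δ ℚ), P ≠ 0 ∧
        Polynomial.eval₂ MvPolynomial.coeToMvPowerSeries.ringHom (W j) P = 0 := by
  intro j hj hjd
  obtain ⟨P, hP, hPW⟩ := hW.isAlgebraic hj hjd
  rw [Polynomial.aeval_def, algebraMap_eq_coeToMvPowerSeries_ringHom] at hPW
  exact ⟨P, hP, hPW⟩
end

section
/- Fix an integer k ≥ 2 and let R ∈ ℚ[[x_2, …, x_k]] satisfy R = 1 + Σ_{i=2}^k x_i · C(2i−1, i−2) · R^{i+1}. Then for every integer a ≥ 1 and all natural numbers n_2, …, n_k, the coefficient of the monomial x_2^{n_2}·…·x_k^{n_k} in R^a equals a · (Σ_{i=2}^k (i+1)·n_i + a − 1)! / ( (Σ_{i=2}^k i·n_i + a)! · n_2!·…·n_k! ) · ∏_{i=2}^k C(2i−1, i−2)^{n_i}. -/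
/-!
Multiplying `R = 1 + ∑ cᵢ xᵢ R ^ (wᵢ + 1)` by `R ^ a` and extracting the coefficient of `x ^ n`
gives
`[x ^ n] R ^ (a + 1) = [x ^ n] R ^ a + ∑ cᵢ [x ^ (n - eᵢ)] R ^ (a + wᵢ + 1)`.
Together with `[1] R ^ a = 1`, and `[x ^ n] R ^ 0 = 0` for `n ≠ 0`, this recursion determines all
coefficients of all powers of `R`, by induction on `|n|` and then on `a`. Lagrange's formula
satisfies the same recursion: with `s = ∑ wᵢ nᵢ` and `d = |n|`, this amounts to
`(s + a + 1) a + ∑ nᵢ (a + wᵢ + 1) = (a + 1) (s + d + a)`.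
-/

open Finset MvPowerSeries
open scoped Nat

@[to_additive]
theorem prod_apply_eq_of_eq_add_single {σ M : Type*} [Fintype σ] [CommMonoid M] (g : σ → ℕ → M)
    {m n : σ →₀ ℕ} {i : σ} (hn : n = m + Finsupp.single i 1) {t : M}
    (ht : g i (m i + 1) = t * g i (m i)) :
    ∏ j, g j (n j) = t * ∏ j, g j (m j) := by
  classical
  have off_i : ∀ j ∈ univ.erase i, g j (n j) = g j (m j) := fun j hj ↦ by
    simp [hn, (ne_of_mem_erase hj).symm]
  have at_i : n i = m i + 1 := by simp [hn]
  rw [← mul_prod_erase univ _ (mem_univ i), ← mul_prod_erase univ (fun j ↦ g j (m j)) (mem_univ i),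
    ← mul_assoc, ← ht, at_i, prod_congr rfl off_i]

theorem factorial_recurrence_of_ne_zero {s d a : ℕ} (hd : d ≠ 0) :
    (s + a + 1) * (a * (s + d + a - 1)!) + ((a + 1) * d + s) * (s + d + a - 1)! =
      (a + 1) * (s + d + (a + 1) - 1)! := by
  obtain ⟨e, rfl⟩ := Nat.exists_eq_add_one_of_ne_zero hd
  have index_eq : s + (e + 1) + a - 1 = s + e + a := by lia
  have index_succ_eq : s + (e + 1) + (a + 1) - 1 = s + e + a + 1 := by lia
  rw [index_eq, index_succ_eq, Nat.factorial_succ]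
  ring

section Lagrange

variable {σ A : Type*} [Fintype σ] [CommSemiring A]

/-- `R` solves the functional equation of multivariate Lagrange inversion, with coefficients `cᵢ`
and exponents `wᵢ + 1`. All exponents are thus positive, which is what allows the coefficients of
the powers of `R` to be written with factorials. -/
def IsLagrangeSolution (w : σ → ℕ) (c : σ → A) (R : MvPowerSeries σ A) : Prop :=
  R = 1 + ∑ i, X i * C (c i) * R ^ (w i + 1)

/-- Lagrange's formula for the coefficient of `x ^ n` in `R ^ a`, with denominators cleared so that
it makes sense over every commutative semiring. The subtraction is truncated only at `a = 0`,
`n = 0`, where the formula fails: its sides are `1` and `0`. -/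
def LagrangeFormula (w : σ → ℕ) (c : σ → A) (R : MvPowerSeries σ A) (a : ℕ) (n : σ →₀ ℕ) : Prop :=
  ((∑ i, w i * n i + a)! : A) * (∏ i, ((n i)! : A)) * coeff n (R ^ a) =
    a * ((∑ i, (w i + 1) * n i + a - 1)! : A) * ∏ i, c i ^ n i

variable {w : σ → ℕ} {c : σ → A} {R : MvPowerSeries σ A}

theorem LagrangeFormula.mul_coeff_X_mul_pow_of_eq_add_single {a : ℕ} {m n : σ →₀ ℕ} {i : σ}
    (h : LagrangeFormula w c R (a + w i + 1) m) (hn : n = m + Finsupp.single i 1) :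
    ((∑ j, w j * n j + (a + 1))! : A) * (∏ j, ((n j)! : A)) *
        (c i * coeff n (X i * R ^ (a + w i + 1))) =
      (n i * (a + w i + 1) : ℕ) * ((∑ j, (w j + 1) * n j + a - 1)! : A) * ∏ j, c j ^ n j := by
  have coeff_eq : coeff n (X i * R ^ (a + w i + 1)) = coeff m (R ^ (a + w i + 1)) := by
    rw [hn, add_comm, X, coeff_add_monomial_mul, one_mul]
  have sum_eq (u : σ → ℕ) : ∑ j, u j * n j = u i + ∑ j, u j * m j :=
    sum_apply_eq_of_eq_add_single (fun j k ↦ u j * k) hn (by ring)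
  have prod_factorial_eq : ∏ j, ((n j)! : A) = (m i + 1 : ℕ) * ∏ j, ((m j)! : A) :=
    prod_apply_eq_of_eq_add_single (fun _ k ↦ (k ! : A)) hn (by simp [Nat.factorial_succ])
  have prod_pow_eq : ∏ j, c j ^ n j = c i * ∏ j, c j ^ m j :=
    prod_apply_eq_of_eq_add_single (fun j k ↦ c j ^ k) hn (pow_succ' _ _)
  have denominator_index_eq :
      w i + ∑ j, w j * m j + (a + 1) = ∑ j, w j * m j + (a + w i + 1) := by ring
  have numerator_index_eq : w i + 1 + ∑ j, (w j + 1) * m j + a - 1 =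
      ∑ j, (w j + 1) * m j + (a + w i + 1) - 1 := by lia
  have apply_eq : n i = m i + 1 := by simp [hn]
  rw [coeff_eq, sum_eq, sum_eq, prod_factorial_eq, prod_pow_eq, denominator_index_eq,
    numerator_index_eq, apply_eq, Nat.cast_mul]
  calc
    _ = (m i + 1 : ℕ) * c i * (((∑ j, w j * m j + (a + w i + 1))! : A) *
          (∏ j, ((m j)! : A)) * coeff m (R ^ (a + w i + 1))) := by ring
    _ = _ := by rw [h]; ring

theorem mul_coeff_X_mul_pow_of_lagrangeFormula {a : ℕ} {n : σ →₀ ℕ} {i : σ}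
    (hlower : ∀ m, n = m + Finsupp.single i 1 → LagrangeFormula w c R (a + w i + 1) m) :
    ((∑ j, w j * n j + (a + 1))! : A) * (∏ j, ((n j)! : A)) *
        (c i * coeff n (X i * R ^ (a + w i + 1))) =
      (n i * (a + w i + 1) : ℕ) * ((∑ j, (w j + 1) * n j + a - 1)! : A) * ∏ j, c j ^ n j := by
  by_cases hi : n i = 0
  · rw [X_dvd_iff.1 (dvd_mul_right (X i) _) n hi, hi]
    simp
  · have hn : n = (n - Finsupp.single i 1) + Finsupp.single i 1 :=
      (tsub_add_cancel_of_le (by simpa using Nat.one_le_iff_ne_zero.2 hi)).symm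
    exact (hlower _ hn).mul_coeff_X_mul_pow_of_eq_add_single hn

theorem lagrangeFormula_exponent_zero {n : σ →₀ ℕ} (hn : n ≠ 0) : LagrangeFormula w c R 0 n := by
  classical
  simp [LagrangeFormula, coeff_one, hn]

namespace IsLagrangeSolution

theorem coeff_zero_pow (hR : IsLagrangeSolution w c R) (a : ℕ) : coeff 0 (R ^ a) = 1 := by
  have constantCoeff_eq : constantCoeff R = 1 := by rw [hR]; simp
  simp [constantCoeff_eq]

theorem lagrangeFormula_monomial_zero (hR : IsLagrangeSolution w c R) {a : ℕ} (ha : a ≠ 0) :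
    LagrangeFormula w c R a 0 := by
  simp [LagrangeFormula, hR.coeff_zero_pow, ← Nat.cast_mul, Nat.mul_factorial_pred ha]

theorem coeff_pow_succ (hR : IsLagrangeSolution w c R) (a : ℕ) (n : σ →₀ ℕ) :
    coeff n (R ^ (a + 1)) =
      coeff n (R ^ a) + ∑ i, c i * coeff n (X i * R ^ (a + w i + 1)) := by
  have pow_succ_eq : R ^ (a + 1) = R ^ a + ∑ i, C (c i) * (X i * R ^ (a + w i + 1)) := by
    calc
      R ^ (a + 1) = R ^ a * (1 + ∑ i, X i * C (c i) * R ^ (w i + 1)) := by rw [pow_succ, ← hR]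
      _ = _ := by
        rw [mul_add, mul_one, mul_sum]
        congr! 2
        ring
  simp only [pow_succ_eq, map_add, map_sum, coeff_C_mul]

theorem lagrangeFormula_succ (hR : IsLagrangeSolution w c R) {a : ℕ} {n : σ →₀ ℕ} (hn : n ≠ 0)
    (ha : LagrangeFormula w c R a n)
    (hlower : ∀ i m, n = m + Finsupp.single i 1 → LagrangeFormula w c R (a + w i + 1) m) :
    LagrangeFormula w c R (a + 1) n := by
  unfold LagrangeFormula at ha ⊢
  set s := ∑ i, w i * n i with hs
  set P := ∏ i, ((n i)! : A)
  set Q := ∏ i, c i ^ n i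
  have hd : n.degree ≠ 0 := (Finsupp.degree_eq_zero_iff n).not.2 hn
  have sum_eq : ∑ i, (w i + 1) * n i = s + n.degree := by
    simp only [add_mul, one_mul, sum_add_distrib, Finsupp.degree_eq_sum, hs]
  have sum_multipliers : ∑ i, n i * (a + w i + 1) = (a + 1) * n.degree + s := by
    rw [hs, Finsupp.degree_eq_sum, mul_sum, ← sum_add_distrib]
    exact sum_congr rfl fun i _ ↦ by ring
  calc
    ((s + (a + 1))! : A) * P * coeff n (R ^ (a + 1))
      = (s + a + 1 : ℕ) * (((s + a)! : A) * P * coeff n (R ^ a)) +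
          ∑ i, ((s + (a + 1))! : A) * P * (c i * coeff n (X i * R ^ (a + w i + 1))) := by
        rw [hR.coeff_pow_succ, mul_add, mul_sum, ← add_assoc s, Nat.factorial_succ, Nat.cast_mul]
        ring
    _ = (s + a + 1 : ℕ) * (a * ((s + n.degree + a - 1)! : A) * Q) +
          ∑ i, (n i * (a + w i + 1) : ℕ) * ((s + n.degree + a - 1)! : A) * Q := by
        rw [ha, ← sum_eq]
        simp only [mul_coeff_X_mul_pow_of_lagrangeFormula (hlower _), s, P, Q]
    _ = ((s + a + 1) * (a * (s + n.degree + a - 1)!) +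
          ((a + 1) * n.degree + s) * (s + n.degree + a - 1)! : ℕ) * Q := by
        rw [← sum_mul, ← sum_mul, ← Nat.cast_sum, sum_multipliers]
        push_cast
        ring
    _ = (a + 1 : ℕ) * ((∑ i, (w i + 1) * n i + (a + 1) - 1)! : A) * Q := by
        rw [factorial_recurrence_of_ne_zero hd, sum_eq, Nat.cast_mul]

end IsLagrangeSolution

theorem simple_bipartite_R_coeff_general (hR : R = 1 + ∑ i, X i * C (c i) * R ^ (w i + 1))
    {a : ℕ} (ha : a ≠ 0) (n : σ →₀ ℕ) :
    ((∑ i, w i * n i + a)! : A) * (∏ i, ((n i)! : A)) * coeff n (R ^ a) =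
      a * ((∑ i, (w i + 1) * n i + a - 1)! : A) * ∏ i, c i ^ n i := by
  have solution : IsLagrangeSolution w c R := hR
  change LagrangeFormula w c R a n
  induction hd : n.degree generalizing n a with
  | zero =>
    rw [(Finsupp.degree_eq_zero_iff n).1 hd]
    exact solution.lagrangeFormula_monomial_zero ha
  | succ d lower =>
    have hn : n ≠ 0 := by rintro rfl; simp at hd
    suffices ∀ b, LagrangeFormula w c R b n from this a
    intro b
    induction b with
    | zero => exact lagrangeFormula_exponent_zero hn
    | succ b previous =>
      refine solution.lagrangeFormula_succ hn previous fun i m hm ↦ lower (Nat.succ_ne_zero _) m ?_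
      simpa [hm] using hd

end Lagrange

/-- **Lagrange-inversion coefficients for simple bipartite maps.**  Let `k ≥ 2` and let
`R ∈ ℚ[[x_2, …, x_k]]` satisfy `R = 1 + Σ_{i=2}^k x_i · C(2i−1, i−2) · R^{i+1}`.  Then for
every integer `a ≥ 1` and all naturals `n_2, …, n_k`, the coefficient of
`x_2^{n_2}·…·x_k^{n_k}` in `R^a` equals
`a · (Σ(i+1)·n_i + a − 1)! / ((Σ i·n_i + a)! · n_2!·…·n_k!) · ∏ C(2i−1, i−2)^{n_i}`. -/
theorem simple_bipartite_R_coeff (k : ℕ) (hk : 2 ≤ k)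
    (R : MvPowerSeries ↥(Finset.Icc 2 k) ℚ)
    (hR : R = 1 + ∑ i ∈ (Finset.Icc 2 k).attach,
        MvPowerSeries.X i *
          MvPowerSeries.C (σ := ↥(Finset.Icc 2 k)) (R := ℚ) (((2 * (i : ℕ) - 1).choose ((i : ℕ) - 2) : ℚ)) *
          R ^ ((i : ℕ) + 1))
    (a : ℕ) (ha : 1 ≤ a) (n : ↥(Finset.Icc 2 k) → ℕ) :
    MvPowerSeries.coeff (R := ℚ) (Finsupp.equivFunOnFinite.symm n) (R ^ a) =
      (a : ℚ) *
          (((∑ i : ↥(Finset.Icc 2 k), ((i : ℕ) + 1) * n i) + a - 1).factorial : ℚ) /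
          ((((∑ i : ↥(Finset.Icc 2 k), (i : ℕ) * n i) + a).factorial : ℚ) *
            ∏ i : ↥(Finset.Icc 2 k), ((n i).factorial : ℚ)) *
        ∏ i : ↥(Finset.Icc 2 k), (((2 * (i : ℕ) - 1).choose ((i : ℕ) - 2) : ℚ)) ^ n i := by
  have formula := simple_bipartite_R_coeff_general hR (Nat.one_le_iff_ne_zero.1 ha)
    (Finsupp.equivFunOnFinite.symm n)
  rwa [div_mul_eq_mul_div, eq_div_iff (by positivity), mul_comm]
end

section
/- In the ring ℚ[[t]] of formal power series over ℚ, the system of four equations M = 1 + t·S·M + t²·R·M², B = 1 + t·S·B + 2·t²·R·M·B, R = 1 + t²·B·M·R, S = t³·B·M²·R² has exactly one solution (M, B, R, S), namely M = α, B = α², R = α, S = t³·α⁶, where α is the unique formal power series in ℚ[[t]] satisfying α = 1 + t²·α⁴. -/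
open PowerSeries in
/-- The system of four equations (in `ℚ[[t]]`, with `t = PowerSeries.X`):
`M = 1 + t·S·M + t²·R·M²`, `B = 1 + t·S·B + 2·t²·R·M·B`, `R = 1 + t²·B·M·R`,
`S = t³·B·M²·R²`. -/
def LooplessSystem (M B R S : PowerSeries ℚ) : Prop :=
  M = 1 + X * S * M + X ^ 2 * R * M ^ 2 ∧
  B = 1 + X * S * B + 2 * X ^ 2 * R * M * B ∧
  R = 1 + X ^ 2 * B * M * R ∧
  S = X ^ 3 * B * M ^ 2 * R ^ 2

/-!
Substituting two solutions into the same polynomial changes its value only by an element of the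
ideal `I` generated by their coordinatewise differences. Since every non-constant term of the
system carries a factor `t`, this gives `I ≤ (t) • I`. As `t` lies in the Jacobson radical,
Nakayama's lemma yields `I = 0`: a system of this shape has at most one solution. That
`(α, α², α, t³α⁶)` is one reduces to multiples of the equation for `α`.
-/

theorem mvPolynomial_eval_sub_eval_mem {A ι : Type*} [CommRing A] {I : Ideal A} {u v : ι → A}
    (huv : ∀ i, u i - v i ∈ I) (p : MvPolynomial ι A) :
    MvPolynomial.eval u p - MvPolynomial.eval v p ∈ I := by
  have mk_comp_eq : Ideal.Quotient.mk I ∘ u = Ideal.Quotient.mk I ∘ v :=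
    funext fun i => Ideal.Quotient.eq.mpr (huv i)
  rw [← Ideal.Quotient.eq, MvPolynomial.eval₂_comp, MvPolynomial.eval₂_comp, mk_comp_eq]

theorem eq_of_eq_add_mul_eval_of_mem_jacobson_bot {A ι : Type*} [CommRing A] [Finite ι] {x : A}
    (hx : x ∈ (⊥ : Ideal A).jacobson) {c : ι → A} {p : ι → MvPolynomial ι A} {u v : ι → A}
    (hu : ∀ i, u i = c i + x * MvPolynomial.eval u (p i))
    (hv : ∀ i, v i = c i + x * MvPolynomial.eval v (p i)) : u = v := by
  let I : Ideal A := Ideal.span (Set.range (u - v))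
  have sub_mem (i : ι) : u i - v i ∈ I := Ideal.subset_span (Set.mem_range_self i)
  have sub_eq (i : ι) :
      u i - v i = x * (MvPolynomial.eval u (p i) - MvPolynomial.eval v (p i)) := by
    linear_combination hu i - hv i
  have I_le : I ≤ Ideal.span {x} • I := by
    refine Ideal.span_le.mpr (Set.range_subset_iff.mpr fun i => ?_)
    rw [Pi.sub_apply, sub_eq]
    exact Ideal.mul_mem_mul (Ideal.mem_span_singleton_self x)
      (mvPolynomial_eval_sub_eval_mem sub_mem (p i))
  have I_eq_bot : I = ⊥ :=
    Submodule.eq_bot_of_le_smul_of_le_jacobson_bot _ I (Submodule.fg_span (Set.finite_range _))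
      I_le ((Ideal.span_singleton_le_iff_mem _).mpr hx)
  exact funext fun i => sub_eq_zero.mp (Ideal.mem_bot.mp (I_eq_bot ▸ sub_mem i))

theorem powerSeries_X_mem_jacobson_bot (A : Type*) [CommRing A] :
    (PowerSeries.X : PowerSeries A) ∈ (⊥ : Ideal (PowerSeries A)).jacobson :=
  Ideal.mem_jacobson_bot.mpr fun f => by simp [PowerSeries.isUnit_iff_constantCoeff]

/-- The equations of `LooplessSystem` over an arbitrary commutative ring `A`, with an element `x`
of `A` in place of the variable `t`. -/
def LooplessSystemAt {A : Type*} [CommRing A] (x M B R S : A) : Prop :=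
  M = 1 + x * S * M + x ^ 2 * R * M ^ 2 ∧
  B = 1 + x * S * B + 2 * x ^ 2 * R * M * B ∧
  R = 1 + x ^ 2 * B * M * R ∧
  S = x ^ 3 * B * M ^ 2 * R ^ 2

namespace LooplessSystemAt

variable {A : Type*} [CommRing A] {x : A}

theorem of_eq_one_add_sq_mul_pow_four {α : A} (hα : α = 1 + x ^ 2 * α ^ 4) :
    LooplessSystemAt x α (α ^ 2) α (x ^ 3 * α ^ 6) := by
  refine ⟨?_, ?_, ?_, ?_⟩
  · linear_combination (1 + x ^ 2 * α ^ 3) * hα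
  · linear_combination (α + 1 + x ^ 2 * α ^ 4) * hα
  · linear_combination hα
  · ring

open MvPolynomial in
/-- The non-constant part of the system divided by `x`, in the unknowns
`(M, B, R, S) = (X 0, X 1, X 2, X 3)`. -/
noncomputable def polynomials (x : A) : Fin 4 → MvPolynomial (Fin 4) A :=
  ![X 3 * X 0 + C x * X 2 * X 0 ^ 2,
    X 3 * X 1 + 2 * C x * X 2 * X 0 * X 1,
    C x * X 1 * X 0 * X 2,
    C x ^ 2 * X 1 * X 0 ^ 2 * X 2 ^ 2]

variable {M B R S M' B' R' S' : A}

theorem eq_add_mul_eval_polynomials (h : LooplessSystemAt x M B R S) (i : Fin 4) :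
    ![M, B, R, S] i =
      ![1, 1, 1, 0] i + x * MvPolynomial.eval ![M, B, R, S] (polynomials x i) := by
  obtain ⟨hM, hB, hR, hS⟩ := h
  fin_cases i <;>
    simp only [polynomials, Fin.reduceFinMk, Fin.zero_eta, Fin.mk_one, Matrix.cons_val, map_add,
      map_mul, map_pow, MvPolynomial.eval_X, MvPolynomial.eval_C, MvPolynomial.eval_ofNat]
  · linear_combination hM
  · linear_combination hB
  · linear_combination hR
  · linear_combination hS

theorem unique (hx : x ∈ (⊥ : Ideal A).jacobson) (h : LooplessSystemAt x M B R S)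
    (h' : LooplessSystemAt x M' B' R' S') : M = M' ∧ B = B' ∧ R = R' ∧ S = S' := by
  have vec_eq : ![M, B, R, S] = ![M', B', R', S'] :=
    eq_of_eq_add_mul_eval_of_mem_jacobson_bot hx h.eq_add_mul_eval_polynomials
      h'.eq_add_mul_eval_polynomials
  simpa [Matrix.vecCons_inj] using vec_eq

end LooplessSystemAt

theorem looplessSystem_unique_solution_general {A : Type*} [CommRing A] {x : A}
    (hx : x ∈ (⊥ : Ideal A).jacobson) {α : A} (hα : α = 1 + x ^ 2 * α ^ 4) :
    LooplessSystemAt x α (α ^ 2) α (x ^ 3 * α ^ 6) ∧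
    ∀ M B R S : A, LooplessSystemAt x M B R S →
      M = α ∧ B = α ^ 2 ∧ R = α ∧ S = x ^ 3 * α ^ 6 :=
  have solution := LooplessSystemAt.of_eq_one_add_sq_mul_pow_four hα
  ⟨solution, fun _ _ _ _ h => h.unique hx solution⟩

open PowerSeries in
/-- In `ℚ[[t]]`, the system `M = 1 + t·S·M + t²·R·M²`, `B = 1 + t·S·B + 2·t²·R·M·B`,
`R = 1 + t²·B·M·R`, `S = t³·B·M²·R²` has exactly one solution `(M, B, R, S)`, namely
`M = α`, `B = α²`, `R = α`, `S = t³·α⁶`, where `α` is the unique formal power series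
satisfying `α = 1 + t²·α⁴`. -/
theorem looplessSystem_unique_solution (α : PowerSeries ℚ)
    (hα : α = 1 + X ^ 2 * α ^ 4) :
    LooplessSystem α (α ^ 2) α (X ^ 3 * α ^ 6) ∧
    ∀ M B R S : PowerSeries ℚ, LooplessSystem M B R S →
      M = α ∧ B = α ^ 2 ∧ R = α ∧ S = X ^ 3 * α ^ 6 :=
  looplessSystem_unique_solution_general (powerSeries_X_mem_jacobson_bot ℚ) hα
end

section
/- Let α ∈ ℚ[[t]] be a formal power series satisfying α = 1 + t·α⁴. Then for every natural number n, the coefficient of t^n in the power series α²·(2 − α) equals 2·(4n+1)! / ((n+1)!·(3n+2)!). -/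
/-!
If `α = 1 + t·α^(p+1)`, then `α^(r+1) = α^r + t·α^(r+p+1)`. Together with `[t^0] α^r = 1` and
`[t^(n+1)] α^0 = 0`, this recurrence determines every coefficient `[t^n] α^r`, and Pascal's rule
shows that `[t^(n+1)] α^r = C(N, n+1) - p·C(N, n)` with `N = (p+1)(n+1) + r - 1` solves it. This
is the Raney number `r/(N+1)·C(N+1, n+1)`. Loopless maps are the case `p = 3`, where
`α²(2 - α) = 2α² - α³` is a difference of two Raney numbers.
-/

open PowerSeries

theorem mul_choose_eq_choose_succ (p n : ℕ) :
    p * (p * (n + 1) + n).choose n = (p * (n + 1) + n).choose (n + 1) := by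
  refine Nat.eq_of_mul_eq_mul_right (Nat.add_one_pos n) ?_
  rw [Nat.choose_succ_right_eq, Nat.add_sub_cancel]
  ring

/-- The functional equation of the Fuss–Catalan generating function of order `p + 1`, which counts
`(p + 1)`-ary trees. The exponent is written `p + 1` so that the closed forms for the coefficients
need no truncated subtraction. -/
def IsFussCatalanSeries {R : Type*} [CommSemiring R] (p : ℕ) (α : R⟦X⟧) : Prop :=
  α = 1 + X * α ^ (p + 1)

namespace IsFussCatalanSeries

section CommSemiring

variable {R : Type*} [CommSemiring R] {p : ℕ} {α : R⟦X⟧}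

theorem constantCoeff_eq_one (hα : IsFussCatalanSeries p α) : constantCoeff α = 1 := by
  rw [hα]
  simp

theorem coeff_zero_pow (hα : IsFussCatalanSeries p α) (r : ℕ) : coeff 0 (α ^ r) = 1 := by
  rw [coeff_zero_eq_constantCoeff_apply, map_pow, hα.constantCoeff_eq_one, one_pow]

theorem pow_succ_eq (hα : IsFussCatalanSeries p α) (r : ℕ) :
    α ^ (r + 1) = α ^ r + X * α ^ (r + p + 1) :=
  calc α ^ (r + 1) = α ^ r * α := pow_succ α r
    _ = α ^ r * (1 + X * α ^ (p + 1)) := congrArg (α ^ r * ·) hα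
    _ = α ^ r + X * α ^ (r + p + 1) := by ring

theorem coeff_succ_pow_succ (hα : IsFussCatalanSeries p α) (n r : ℕ) :
    coeff (n + 1) (α ^ (r + 1)) = coeff (n + 1) (α ^ r) + coeff n (α ^ (r + p + 1)) := by
  rw [hα.pow_succ_eq, map_add, coeff_succ_X_mul]

theorem coeff_one_pow (hα : IsFussCatalanSeries p α) (r : ℕ) : coeff 1 (α ^ r) = r := by
  induction r with
  | zero => simp [coeff_one]
  | succ r ih => rw [hα.coeff_succ_pow_succ 0 r, ih, hα.coeff_zero_pow, Nat.cast_succ]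

theorem coeff_succ_pow_add_mul_choose (hα : IsFussCatalanSeries p α) (n r : ℕ) :
    coeff (n + 1) (α ^ r) + p * ((p * (n + 1) + n + r).choose n : R) =
      (p * (n + 1) + n + r).choose (n + 1) := by
  induction n generalizing r with
  | zero => simp [hα.coeff_one_pow, add_comm]
  | succ n ih_n =>
    induction r with
    | zero => simpa [coeff_one] using congrArg (Nat.cast (R := R)) (mul_choose_eq_choose_succ p _)
    | succ r ih_r =>
      have ih_n' := ih_n (r + p + 1)
      rw [show p * (n + 1) + n + (r + p + 1) = p * (n + 1 + 1) + (n + 1) + r by ring] at ih_n'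
      rw [hα.coeff_succ_pow_succ, ← add_assoc _ r 1]
      generalize p * (n + 1 + 1) + (n + 1) + r = N at ih_n' ih_r ⊢
      calc coeff (n + 1 + 1) (α ^ r) + coeff (n + 1) (α ^ (r + p + 1)) +
            p * ((N + 1).choose (n + 1) : R)
          = (coeff (n + 1) (α ^ (r + p + 1)) + p * (N.choose n : R)) +
            (coeff (n + 1 + 1) (α ^ r) + p * (N.choose (n + 1) : R)) := by
            rw [Nat.choose_succ_succ', Nat.cast_add]
            ring
        _ = (N.choose (n + 1) : R) + N.choose (n + 1 + 1) := by rw [ih_n', ih_r]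
        _ = (N + 1).choose (n + 1 + 1) := by rw [Nat.choose_succ_succ' N, Nat.cast_add]

end CommSemiring

variable {R : Type*} [CommRing R] {p : ℕ} {α : R⟦X⟧}

theorem succ_mul_coeff_succ_pow (hα : IsFussCatalanSeries p α) (n r : ℕ) :
    (n + 1) * coeff (n + 1) (α ^ r) = r * ((p * (n + 1) + n + r).choose n : R) := by
  have absorption : ((p * (n + 1) + n + r).choose (n + 1) : R) * (n + 1) =
      (p * (n + 1) + n + r).choose n * (p * (n + 1) + r) := by
    have top_sub : p * (n + 1) + n + r - n = p * (n + 1) + r := by omega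
    have := Nat.choose_succ_right_eq (p * (n + 1) + n + r) n
    rw [top_sub] at this
    exact_mod_cast congrArg (Nat.cast (R := R)) this
  linear_combination (n + 1 : R) * hα.coeff_succ_pow_add_mul_choose n r + absorption

theorem coeff_pow_succ_mul_factorial (hα : IsFussCatalanSeries p α) (n r : ℕ) :
    coeff n (α ^ (r + 1)) * (n.factorial * (p * n + r + 1).factorial : R) =
      (r + 1) * ((p * n + n + r).factorial : R) := by
  cases n with
  | zero => simp [hα.coeff_zero_pow, Nat.factorial_succ]
  | succ n =>
    have raney := hα.succ_mul_coeff_succ_pow n (r + 1)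
    have choose_factorial :
        ((p * (n + 1) + n + (r + 1)).choose n * (p * (n + 1) + r + 1).factorial * n.factorial : R) =
          (p * (n + 1) + (n + 1) + r).factorial := by
      have := Nat.add_choose_mul_factorial_mul_factorial (p * (n + 1) + r + 1) n
      rw [show p * (n + 1) + r + 1 + n = p * (n + 1) + n + (r + 1) by ring] at this
      rw [show p * (n + 1) + (n + 1) + r = p * (n + 1) + n + (r + 1) by ring]
      exact_mod_cast congrArg (Nat.cast (R := R)) this
    rw [← choose_factorial, Nat.factorial_succ]
    push_cast at raney ⊢
    linear_combination (n.factorial * (p * (n + 1) + r + 1).factorial : R) * raney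

end IsFussCatalanSeries

theorem loopless_maps_coeff_general {K : Type*} [Field K] [CharZero K] (α : K⟦X⟧)
    (hα : α = 1 + X * α ^ 4) (n : ℕ) :
    coeff n (α ^ 2 * (2 - α)) =
      2 * ((4 * n + 1).factorial : K) / ((n + 1).factorial * (3 * n + 2).factorial) := by
  have fussCatalan : IsFussCatalanSeries 3 α := hα
  have coeff_sq := fussCatalan.coeff_pow_succ_mul_factorial n 1
  have coeff_cube := fussCatalan.coeff_pow_succ_mul_factorial n 2
  have coeff_eq : coeff n (α ^ 2 * (2 - α)) = 2 * coeff n (α ^ 2) - coeff n (α ^ 3) := by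
    rw [show α ^ 2 * (2 - α) = (2 : K) • α ^ 2 - α ^ 3 by rw [ofNat_smul_eq_nsmul]; ring]
    simp
  rw [show 3 * n + n = 4 * n by ring] at coeff_sq coeff_cube
  have denominator_ne_zero : ((n + 1).factorial * (3 * n + 2).factorial : K) ≠ 0 :=
    mod_cast mul_ne_zero (Nat.factorial_ne_zero _) (Nat.factorial_ne_zero _)
  rw [coeff_eq, eq_div_iff denominator_ne_zero]
  simp only [Nat.factorial_succ, Nat.reduceAdd] at coeff_sq coeff_cube ⊢
  push_cast at coeff_sq coeff_cube ⊢
  linear_combination 2 * (n + 1 : K) * coeff_sq - coeff_cube / 3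

/-- **Counting rooted loopless maps.**  Let `α ∈ ℚ[[t]]` satisfy `α = 1 + t·α⁴`.  Then for
every natural number `n`, the coefficient of `t^n` in `α²·(2 − α)` equals
`2·(4n+1)! / ((n+1)!·(3n+2)!)`. -/
theorem loopless_maps_coeff (α : PowerSeries ℚ)
    (hα : α = 1 + PowerSeries.X * α ^ 4) (n : ℕ) :
    PowerSeries.coeff n (α ^ 2 * (2 - α)) =
      2 * ((4 * n + 1).factorial : ℚ) /
        (((n + 1).factorial : ℚ) * ((3 * n + 2).factorial : ℚ)) :=
  loopless_maps_coeff_general α hα n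
end
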